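/- arXiv:1412.7174 — 11 statements merged into one kernel-verified Lean document; each statement's English description precedes it below -/
import Mathlib

section
/- Let (p_i, ρ_i)_{i=1}^m be an ensemble of states on ℂ^n. Suppose that every m-element POVM maximizing the success probability P_s = ∑_{i=1}^m p_i Tr(ρ_i Π_i) is a projective measurement. Then there is exactly one m-element POVM maximizing P_s. -/
open Matrix
open scoped ComplexOrder

noncomputable section

/-- Rank-one outer product `x x*` as an `n × n` complex matrix. -/
def outer {n : ℕ} (x : Fin n → ℂ) : Matrix (Fin n) (Fin n) ℂ :=
  Matrix.vecMulVec x (star x)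

/-- A POVM indexed by `ι`: positive semidefinite elements summing to the identity. -/
def IsPOVM {ι : Type} [Fintype ι] {n : ℕ} (E : ι → Matrix (Fin n) (Fin n) ℂ) : Prop :=
  (∀ i, (E i).PosSemidef) ∧ ∑ i, E i = 1

/-- Success probability of the POVM `E` for the ensemble `(p, ρ)`. -/
def succProb {ι : Type} [Fintype ι] {n : ℕ} (p : ι → ℝ)
    (ρ E : ι → Matrix (Fin n) (Fin n) ℂ) : ℝ :=
  ∑ i, p i * ((ρ i * E i).trace).re

/-- `P` is a POVM maximizing the success probability for the ensemble `(p, ρ)`. -/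
def IsOptimal {ι : Type} [Fintype ι] {n : ℕ} (p : ι → ℝ)
    (ρ P : ι → Matrix (Fin n) (Fin n) ℂ) : Prop :=
  IsPOVM P ∧ ∀ E, IsPOVM E → succProb p ρ E ≤ succProb p ρ P

/-- An ensemble of states: positive probabilities summing to 1, states positive
semidefinite of trace 1. -/
def IsEnsemble {ι : Type} [Fintype ι] {n : ℕ} (p : ι → ℝ)
    (ρ : ι → Matrix (Fin n) (Fin n) ℂ) : Prop :=
  (∀ i, 0 < p i) ∧ ∑ i, p i = 1 ∧ (∀ i, (ρ i).PosSemidef) ∧ ∀ i, (ρ i).trace = 1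

/-- A linearly independent (LI) ensemble: the ranks sum to `n` and the column spaces
of the states together span `ℂ^n`. -/
def IsLIEnsemble {ι : Type} [Fintype ι] {n : ℕ} (p : ι → ℝ)
    (ρ : ι → Matrix (Fin n) (Fin n) ℂ) : Prop :=
  IsEnsemble p ρ ∧ (∑ i, (ρ i).rank = n) ∧
    (⨆ i, LinearMap.range (ρ i).mulVecLin) = ⊤

/-- A projective measurement: mutually orthogonal Hermitian idempotents summing to
the identity. -/
def IsProjectiveMeasurement {ι : Type} [Fintype ι] {n : ℕ}
    (P : ι → Matrix (Fin n) (Fin n) ℂ) : Prop :=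
  (∀ i j, i ≠ j → P i * P j = 0) ∧ (∀ i, P i * P i = P i) ∧
    (∀ i, (P i).IsHermitian) ∧ ∑ i, P i = 1

/-- The pretty good measurement of the ensemble `(q, σ)` (with elements
`S^{-1/2} qᵢσᵢ S^{-1/2}`, `S = ∑ qⱼσⱼ`, `S^{1/2}` the unique positive definite square
root of `S`) is an optimal POVM for the minimum error discrimination of `(p, ρ)`. -/
def PGMIsOptimal {m n : ℕ} (q : Fin m → ℝ) (σ : Fin m → Matrix (Fin n) (Fin n) ℂ)
    (p : Fin m → ℝ) (ρ : Fin m → Matrix (Fin n) (Fin n) ℂ) : Prop :=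
  ∀ R : Matrix (Fin n) (Fin n) ℂ, R.PosDef → R * R = ∑ j, (q j : ℂ) • σ j →
    IsOptimal p ρ (fun i => R⁻¹ * ((q i : ℂ) • σ i) * R⁻¹)

lemma entry_bound {m n : ℕ} {E : Fin m → Matrix (Fin n) (Fin n) ℂ} (hE : IsPOVM E)
    (i : Fin m) (a b : Fin n) : ‖E i a b‖ ≤ 1 := by
  have hd : ∀ a, 0 ≤ (E i a a) ∧ (E i a a) ≤ 1 := by
    intro a
    refine ⟨(hE.1 i).diag_nonneg, ?_⟩
    have h1 : ∑ j, E j a a = 1 := by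
      have := congrFun (congrFun hE.2 a) a
      simpa [Matrix.sum_apply] using this
    rw [← h1]
    exact Finset.single_le_sum (f := fun j => E j a a)
      (fun j _ => (hE.1 j).diag_nonneg) (Finset.mem_univ i)
  have hdet := ((hE.1 i).submatrix ![a, b]).det_nonneg
  rw [Matrix.det_fin_two] at hdet
  simp only [Matrix.submatrix_apply, Matrix.cons_val_zero, Matrix.cons_val_one] at hdet
  have hh : E i b a = star (E i a b) := ((hE.1 i).isHermitian.apply b a).symm
  rw [hh, Complex.star_def, Complex.mul_conj] at hdet
  obtain ⟨ha0, ha1⟩ := hd a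
  obtain ⟨hb0, hb1⟩ := hd b
  rw [Complex.le_def] at ha0 ha1 hb0 hb1 hdet
  simp at ha0 ha1 hb0 hb1 hdet
  rw [← ha0.2, ← hb0.2, Complex.normSq_eq_norm_sq] at hdet
  nlinarith [norm_nonneg (E i a b), mul_le_mul ha1.1 hb1.1 hb0.1 zero_le_one, hdet.1]

lemma isCompact_povm (m n : ℕ) :
    IsCompact {E : Fin m → Matrix (Fin n) (Fin n) ℂ | IsPOVM E} := by
  have hK : IsCompact (Set.univ.pi fun _ : Fin m => Set.univ.pi fun _ : Fin n =>
      Set.univ.pi fun _ : Fin n => Metric.closedBall (0 : ℂ) 1) :=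
    isCompact_univ_pi fun _ => isCompact_univ_pi fun _ => isCompact_univ_pi fun _ =>
      isCompact_closedBall _ _
  refine IsCompact.of_isClosed_subset hK ?_ ?_
  · have : {E : Fin m → Matrix (Fin n) (Fin n) ℂ | IsPOVM E} =
        {E | ∀ i, (E i)ᴴ = E i} ∩ {E | ∀ i, ∀ x : Fin n → ℂ, 0 ≤ star x ⬝ᵥ (E i *ᵥ x)} ∩
          {E | ∑ i, E i = 1} := by
      ext E
      simp only [IsPOVM, Matrix.posSemidef_iff_dotProduct_mulVec, Set.mem_setOf_eq, Set.mem_inter_iff,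
        Matrix.IsHermitian, forall_and]
    rw [this]
    refine (IsClosed.inter ?_ ?_).inter ?_
    · simp only [Set.setOf_forall]
      exact isClosed_iInter fun i => isClosed_eq (by fun_prop) (by fun_prop)
    · simp only [Set.setOf_forall]
      exact isClosed_iInter fun i => isClosed_iInter fun x =>
        isClosed_le continuous_const (by fun_prop)
    · exact isClosed_eq (by fun_prop) (by fun_prop)
  · intro E hE i _ a _ b _
    simpa using entry_bound hE i a b

lemma exists_optimal {m n : ℕ} (p : Fin m → ℝ) (ρ : Fin m → Matrix (Fin n) (Fin n) ℂ)
    (hens : IsEnsemble p ρ) : ∃ P, IsOptimal p ρ P := by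
  have hm : Nonempty (Fin m) := by
    by_contra h
    rw [not_nonempty_iff] at h
    have := hens.2.1
    simp at this
  obtain ⟨i⟩ := hm
  have hne : {E : Fin m → Matrix (Fin n) (Fin n) ℂ | IsPOVM E}.Nonempty := by
    refine ⟨Pi.single i 1, fun j => ?_, ?_⟩
    · by_cases h : j = i
      · subst h; simpa using Matrix.PosSemidef.one
      · simpa [h] using Matrix.PosSemidef.zero
    · simp
  obtain ⟨P, hP, hmax⟩ := (isCompact_povm m n).exists_isMaxOn hne (f := succProb p ρ)
    (by unfold succProb; fun_prop)
  exact ⟨P, hP, fun E hE => hmax hE⟩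

lemma optimal_midpoint {m n : ℕ} {p : Fin m → ℝ} {ρ P Q : Fin m → Matrix (Fin n) (Fin n) ℂ}
    (hP : IsOptimal p ρ P) (hQ : IsOptimal p ρ Q) :
    IsOptimal p ρ (fun i => (1 / 2 : ℝ) • (P i + Q i)) := by
  refine ⟨⟨fun i => ?_, ?_⟩, fun E hE => ?_⟩
  · exact ((hP.1.1 i).add (hQ.1.1 i)).smul (by norm_num)
  · rw [← Finset.smul_sum, Finset.sum_add_distrib, hP.1.2, hQ.1.2, ← two_smul ℝ, smul_smul]
    norm_num
  · have h : succProb p ρ (fun i => (1 / 2 : ℝ) • (P i + Q i)) =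
        (succProb p ρ P + succProb p ρ Q) / 2 := by
      unfold succProb
      rw [← Finset.sum_add_distrib, Finset.sum_div]
      refine Finset.sum_congr rfl fun i _ => ?_
      rw [Matrix.mul_smul, Matrix.trace_smul, Complex.smul_re, Matrix.mul_add,
        Matrix.trace_add, Complex.add_re, smul_eq_mul]
      ring
    rw [h]
    linarith [hP.2 E hE, hQ.2 E hE]

/-- If every optimal POVM for the ensemble is a projective measurement, then there is
exactly one optimal POVM. -/
theorem stmt_1 {m n : ℕ} (p : Fin m → ℝ) (ρ : Fin m → Matrix (Fin n) (Fin n) ℂ)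
    (hens : IsEnsemble p ρ)
    (hproj : ∀ P : Fin m → Matrix (Fin n) (Fin n) ℂ,
      IsOptimal p ρ P → IsProjectiveMeasurement P) :
    ∃! P : Fin m → Matrix (Fin n) (Fin n) ℂ, IsOptimal p ρ P := by
  obtain ⟨P, hP⟩ := exists_optimal p ρ hens
  refine ⟨P, hP, fun Q hQ => ?_⟩
  funext i
  have h1 := (hproj P hP).2.1 i
  have h2 := (hproj Q hQ).2.1 i
  have h3 := (hproj _ (optimal_midpoint hP hQ)).2.1 i
  have hH : (Q i - P i).IsHermitian := ((hproj Q hQ).2.2.1 i).sub ((hproj P hP).2.2.1 i)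
  have h4 : (P i + Q i) * (P i + Q i) = (2 : ℝ) • (P i + Q i) := by
    simp only [Matrix.smul_mul, Matrix.mul_smul, smul_smul] at h3
    have := congrArg (fun M => (4 : ℝ) • M) h3
    simp only [smul_smul] at this
    norm_num at this
    rw [this, smul_add]
  have h5 : (Q i - P i) * (Q i - P i) = 0 := by
    have e : (Q i - P i) * (Q i - P i) =
        (2 : ℝ) • (P i * P i + Q i * Q i) - (P i + Q i) * (P i + Q i) := by
      rw [two_smul]; noncomm_ring
    rw [e, h4, h1, h2, sub_self]
  have h6 : (Q i - P i)ᴴ * (Q i - P i) = 0 := by rw [hH.eq, h5]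
  exact sub_eq_zero.mp (Matrix.conjTranspose_mul_self_eq_zero.mp h6)
end
end

section
/- Let p_1,…,p_m > 0, let ρ_1,…,ρ_m be n×n complex positive semidefinite matrices with rank ρ_i = r_i, and let (Π_i)_{i=1}^m be a projective measurement on ℂ^n with rank Π_i = r_i for every i (so r_1+⋯+r_m = n). If Z = ∑_{k=1}^m p_k ρ_k Π_k is positive definite, then rank(ρ_i Π_i) = r_i for every i. -/
open Matrix
open scoped ComplexOrder

noncomputable section

/-- If `Z = ∑ pₖρₖΠₖ` is positive definite, then `rank (ρᵢΠᵢ) = rᵢ` for every `i`. -/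
theorem stmt_4 {m n : ℕ} (p : Fin m → ℝ) (hp : ∀ i, 0 < p i)
    (ρ : Fin m → Matrix (Fin n) (Fin n) ℂ) (hρ : ∀ i, (ρ i).PosSemidef)
    (P : Fin m → Matrix (Fin n) (Fin n) ℂ) (hP : IsProjectiveMeasurement P)
    (hrank : ∀ i, (P i).rank = (ρ i).rank)
    (hsum : ∑ i, (ρ i).rank = n)
    (Z : Matrix (Fin n) (Fin n) ℂ) (hZ : Z = ∑ k, (p k : ℂ) • (ρ k * P k))
    (hpos : Z.PosDef) :
    ∀ i, (ρ i * P i).rank = (ρ i).rank := by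
  intro i
  obtain ⟨horth, hidem, _, _⟩ := hP
  have hZP : Z * P i = (ρ i * P i) * ((p i : ℂ) • (1 : Matrix (Fin n) (Fin n) ℂ)) := by
    rw [hZ, Finset.sum_mul, Finset.sum_eq_single i]
    · simp [Matrix.mul_assoc, hidem]
    · intro k _ hk
      simp [Matrix.mul_assoc, horth k i hk]
    · simp
  have hdet : IsUnit Z.det := (Matrix.isUnit_iff_isUnit_det _).1 hpos.isUnit
  apply le_antisymm (Matrix.rank_mul_le_left _ _)
  rw [← hrank i, ← Matrix.rank_mul_eq_right_of_isUnit_det Z (P i) hdet, hZP]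
  exact Matrix.rank_mul_le_left _ _
end
end

section
/- Let p_1,…,p_m > 0, let ρ_1,…,ρ_m be n×n complex positive semidefinite matrices with rank ρ_i = r_i, and let (Π_i)_{i=1}^m be a projective measurement on ℂ^n with rank Π_i = r_i for every i (so r_1+⋯+r_m = n). If Z = ∑_{k=1}^m p_k ρ_k Π_k is positive definite, then for every i the column space of ρ_i Π_i ρ_i equals the column space of ρ_i; in particular rank(ρ_i Π_i ρ_i) = r_i. -/
open Matrix
open scoped ComplexOrder

noncomputable section

/-- If `Z = ∑ pₖρₖΠₖ` is positive definite, then the column space of `ρᵢΠᵢρᵢ` equals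
the column space of `ρᵢ`; in particular `rank (ρᵢΠᵢρᵢ) = rᵢ`. -/
theorem stmt_5 {m n : ℕ} (p : Fin m → ℝ) (hp : ∀ i, 0 < p i)
    (ρ : Fin m → Matrix (Fin n) (Fin n) ℂ) (hρ : ∀ i, (ρ i).PosSemidef)
    (P : Fin m → Matrix (Fin n) (Fin n) ℂ) (hP : IsProjectiveMeasurement P)
    (hrank : ∀ i, (P i).rank = (ρ i).rank)
    (hsum : ∑ i, (ρ i).rank = n)
    (Z : Matrix (Fin n) (Fin n) ℂ) (hZ : Z = ∑ k, (p k : ℂ) • (ρ k * P k))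
    (hpos : Z.PosDef) :
    ∀ i, LinearMap.range (ρ i * P i * ρ i).mulVecLin = LinearMap.range (ρ i).mulVecLin
      ∧ (ρ i * P i * ρ i).rank = (ρ i).rank := by
  obtain ⟨h0, hid, hherm, -⟩ := hP
  intro i
  have hZP : Z * P i = (p i : ℂ) • (ρ i * P i) := by
    rw [hZ, Finset.sum_mul, Finset.sum_eq_single i]
    · rw [Matrix.smul_mul, Matrix.mul_assoc, hid]
    · intro k _ hk
      rw [Matrix.smul_mul, Matrix.mul_assoc, h0 k i hk, Matrix.mul_zero, smul_zero]
    · intro h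
      exact absurd (Finset.mem_univ i) h
  have hpi : (p i : ℂ) ≠ 0 := by exact_mod_cast (hp i).ne'
  have hdet : IsUnit Z.det := (Matrix.isUnit_iff_isUnit_det Z).1 hpos.isUnit
  have h1 : (Z * P i).rank = (P i).rank :=
    Matrix.rank_mul_eq_right_of_isUnit_det Z (P i) hdet
  have h2 : (P i).rank ≤ (ρ i * P i).rank := by
    rw [← h1, hZP]
    have : (p i : ℂ) • (ρ i * P i) = (ρ i * P i) * ((p i : ℂ) • (1 : Matrix (Fin n) (Fin n) ℂ)) := by
      rw [Matrix.mul_smul, Matrix.mul_one]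
    rw [this]
    exact Matrix.rank_mul_le_left _ _
  have h3 : (ρ i * P i).rank = (ρ i).rank :=
    le_antisymm (Matrix.rank_mul_le_left _ _) (hrank i ▸ h2)
  have h4 : ρ i * P i * ρ i = (ρ i * P i) * (ρ i * P i)ᴴ := by
    rw [Matrix.conjTranspose_mul, (hherm i).eq, (hρ i).isHermitian.eq,
      ← Matrix.mul_assoc (ρ i * P i) (P i), Matrix.mul_assoc (ρ i) (P i) (P i), hid]
  have h5 : (ρ i * P i * ρ i).rank = (ρ i).rank := by
    rw [h4, Matrix.rank_self_mul_conjTranspose, h3]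
  refine ⟨Submodule.eq_of_le_of_finrank_eq ?_ h5, h5⟩
  rw [Matrix.mul_assoc, Matrix.mulVecLin_mul]
  exact LinearMap.range_comp_le_range _ _
end
end

section
/- Let M be a Hermitian positive definite (k+l)×(k+l) complex matrix written in block form M = [[A, B],[B*, C]] with A the k×k upper-left block (so A is positive definite, hence invertible). Then M⁻¹ − [[A⁻¹, 0],[0, 0]] is positive semidefinite, where [[A⁻¹, 0],[0, 0]] denotes the (k+l)×(k+l) block matrix with A⁻¹ in the upper-left k×k block and zeros elsewhere. -/
open Matrix
open scoped ComplexOrder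

noncomputable section

/-- For a positive definite block matrix `M = [[A, B], [B*, C]]`,
`M⁻¹ - [[A⁻¹, 0], [0, 0]]` is positive semidefinite. -/
theorem stmt_6 {k l : ℕ} (A : Matrix (Fin k) (Fin k) ℂ) (B : Matrix (Fin k) (Fin l) ℂ)
    (C : Matrix (Fin l) (Fin l) ℂ)
    (hM : (Matrix.fromBlocks A B Bᴴ C).PosDef) :
    ((Matrix.fromBlocks A B Bᴴ C)⁻¹ - Matrix.fromBlocks A⁻¹ 0 0 0).PosSemidef := by
  have hA : A.PosDef := by
    have h := hM.submatrix (e := Sum.inl) Sum.inl_injective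
    have e : (Matrix.fromBlocks A B Bᴴ C).submatrix Sum.inl Sum.inl = A := by
      ext i j; rfl
    rwa [e] at h
  have hAdet : IsUnit A.det := (Matrix.isUnit_iff_isUnit_det A).1 hA.isUnit
  have hNMN : Matrix.fromBlocks A⁻¹ 0 0 (0 : Matrix (Fin l) (Fin l) ℂ) *
      Matrix.fromBlocks A B Bᴴ C * Matrix.fromBlocks A⁻¹ 0 0 0 =
      Matrix.fromBlocks A⁻¹ 0 0 0 := by
    simp [Matrix.fromBlocks_multiply, Matrix.nonsing_inv_mul A hAdet]
  have hNH : (Matrix.fromBlocks A⁻¹ 0 0 (0 : Matrix (Fin l) (Fin l) ℂ))ᴴ =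
      Matrix.fromBlocks A⁻¹ 0 0 0 := by
    simp [Matrix.fromBlocks_conjTranspose, hA.inv.isHermitian.eq]
  generalize Matrix.fromBlocks A B Bᴴ C = M at *
  generalize Matrix.fromBlocks A⁻¹ 0 0 (0 : Matrix (Fin l) (Fin l) ℂ) = N at *
  have hMdet : IsUnit M.det := (Matrix.isUnit_iff_isUnit_det M).1 hM.isUnit
  have h := hM.posSemidef.mul_mul_conjTranspose_same (M⁻¹ - N)
  have e : (M⁻¹ - N) * M * (M⁻¹ - N)ᴴ = M⁻¹ - N := by
    rw [Matrix.conjTranspose_sub, hM.inv.isHermitian.eq, hNH, sub_mul,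
      Matrix.nonsing_inv_mul M hMdet, sub_mul, one_mul, mul_sub, hNMN, mul_assoc,
      Matrix.mul_nonsing_inv M hMdet, mul_one]
    abel
  rwa [e] at h
end
end

section
/- Let (p_i, ρ_i)_{i=1}^m be a linearly independent (LI) ensemble on ℂ^n and let (Π_i) be an m-element POVM. Set Z = ∑_{k=1}^m p_k ρ_k Π_k. If (Z − p_iρ_i)Π_i = 0 and Π_i(Z − p_iρ_i) = 0 for all i, and Z is positive definite, then (Π_i) is optimal: for every m-element POVM (E_i), ∑_{i=1}^m p_i Tr(ρ_i E_i) ≤ ∑_{i=1}^m p_i Tr(ρ_i Π_i). -/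
open Matrix
open scoped ComplexOrder

noncomputable section

open scoped MatrixOrder in
lemma aux_trace {n : ℕ} {A B : Matrix (Fin n) (Fin n) ℂ} (hA : A.PosSemidef)
    (hB : B.PosSemidef) : 0 ≤ ((A * B).trace).re := by
  obtain ⟨C, rfl⟩ := CStarAlgebra.nonneg_iff_eq_star_mul_self.mp hB.nonneg
  have h := (hA.mul_mul_conjTranspose_same C).trace_nonneg
  rw [Matrix.star_eq_conjTranspose, ← Matrix.mul_assoc, Matrix.trace_mul_comm, ← Matrix.mul_assoc]
  exact (Complex.le_def.mp h).1

lemma aux_rank_add {n : ℕ} (A B : Matrix (Fin n) (Fin n) ℂ) :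
    (A + B).rank ≤ A.rank + B.rank := by
  unfold Matrix.rank
  refine le_trans (Submodule.finrank_mono (t := LinearMap.range A.mulVecLin ⊔
    LinearMap.range B.mulVecLin) ?_) (Submodule.finrank_add_le_finrank_add_finrank _ _)
  rintro _ ⟨v, rfl⟩
  rw [Matrix.mulVecLin_add, LinearMap.add_apply]
  exact Submodule.add_mem_sup ⟨v, rfl⟩ ⟨v, rfl⟩

lemma aux_rank_sum {ι : Type} {n : ℕ} (s : Finset ι) (A : ι → Matrix (Fin n) (Fin n) ℂ) :
    (∑ i ∈ s, A i).rank ≤ ∑ i ∈ s, (A i).rank := by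
  classical
  induction s using Finset.induction_on with
  | empty => simp
  | insert a s ha ih =>
    rw [Finset.sum_insert ha, Finset.sum_insert ha]
    exact (aux_rank_add _ _).trans (by gcongr)

lemma aux_factor {n : ℕ} (A B : Matrix (Fin n) (Fin n) ℂ) (h : A.rank ≤ (A * B).rank) :
    ∃ X, A = A * B * X := by
  have hle : LinearMap.range (A * B).mulVecLin ≤ LinearMap.range A.mulVecLin := by
    rw [Matrix.mulVecLin_mul]
    exact LinearMap.range_comp_le_range _ _
  have heq := Submodule.eq_of_le_of_finrank_le hle h
  have hx : ∀ j, ∃ x, (A * B) *ᵥ x = A.col j := by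
    intro j
    have : A.col j ∈ LinearMap.range (A * B).mulVecLin := by
      rw [heq]
      exact ⟨Pi.single j 1, by simp⟩
    exact this
  choose x hx using hx
  refine ⟨Matrix.of fun i j => x j i, ?_⟩
  ext i j
  exact (congrFun (hx j) i).symm

/-- For an LI ensemble: if the POVM `P` satisfies the complementary slackness
conditions and `Z = ∑ pₖρₖΠₖ` is positive definite, then `P` is optimal. -/
theorem stmt_8 {m n : ℕ} (p : Fin m → ℝ) (ρ : Fin m → Matrix (Fin n) (Fin n) ℂ)
    (hens : IsLIEnsemble p ρ)
    (P : Fin m → Matrix (Fin n) (Fin n) ℂ) (hP : IsPOVM P)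
    (Z : Matrix (Fin n) (Fin n) ℂ) (hZ : Z = ∑ k, (p k : ℂ) • (ρ k * P k))
    (h1 : ∀ i, (Z - (p i : ℂ) • ρ i) * P i = 0)
    (h2 : ∀ i, P i * (Z - (p i : ℂ) • ρ i) = 0)
    (hpos : Z.PosDef) :
    ∀ E : Fin m → Matrix (Fin n) (Fin n) ℂ, IsPOVM E →
      succProb p ρ E ≤ succProb p ρ P := by
  intro E hE
  obtain ⟨⟨hp, -, hρ, -⟩, hr, -⟩ := hens
  have hZP : ∀ i, Z * P i = ((p i : ℂ) • ρ i) * P i := fun i => by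
    have := h1 i
    rwa [Matrix.sub_mul, sub_eq_zero] at this
  have hrank1 : ∀ i, (P i).rank = (ρ i * P i).rank := fun i => by
    have hdet : IsUnit Z.det := (Matrix.isUnit_iff_isUnit_det Z).mp hpos.isUnit
    rw [← Matrix.rank_mul_eq_right_of_isUnit_det Z (P i) hdet, hZP i, Matrix.smul_mul]
    exact Matrix.rank_smul_of_mem_nonZeroDivisors _
      (mem_nonZeroDivisors_of_ne_zero (by exact_mod_cast (hp i).ne'))
  have hle : ∀ i ∈ Finset.univ, (P i).rank ≤ (ρ i).rank := fun i _ => by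
    rw [hrank1 i]
    exact Matrix.rank_mul_le_left _ _
  have hn : n ≤ ∑ i, (P i).rank := by
    have := aux_rank_sum Finset.univ P
    rw [hP.2, Matrix.rank_one, Fintype.card_fin] at this
    exact this
  have heq : ∀ i, (P i).rank = (ρ i).rank := fun i =>
    (Finset.sum_eq_sum_iff_of_le hle).mp
      (le_antisymm (Finset.sum_le_sum hle) (hr.le.trans hn)) i (Finset.mem_univ i)
  have hpsd : ∀ i, (Z - (p i : ℂ) • ρ i).PosSemidef := by
    intro i
    obtain ⟨X, hX⟩ := aux_factor (ρ i) (P i) (by rw [← hrank1, heq])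
    have hU : ((p i : ℂ) • ρ i) * (1 - P i * X) = 0 := by
      rw [Matrix.smul_mul, Matrix.mul_sub, Matrix.mul_one, ← Matrix.mul_assoc, ← hX, sub_self,
        smul_zero]
    have hA : (Z - (p i : ℂ) • ρ i) * (1 - P i * X) = Z - (p i : ℂ) • ρ i := by
      rw [Matrix.mul_sub, Matrix.mul_one, ← Matrix.mul_assoc, h1, Matrix.zero_mul, sub_zero]
    have hB : (1 - P i * X)ᴴ * (Z - (p i : ℂ) • ρ i) = Z - (p i : ℂ) • ρ i := by
      rw [Matrix.conjTranspose_sub, Matrix.conjTranspose_one, Matrix.conjTranspose_mul,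
        (hP.1 i).isHermitian.eq, Matrix.sub_mul, Matrix.one_mul, Matrix.mul_assoc, h2,
        Matrix.mul_zero, sub_zero]
    have hC : Z - (p i : ℂ) • ρ i = (1 - P i * X)ᴴ * Z * (1 - P i * X) := by
      conv_lhs => rw [← hB, ← hA]
      rw [Matrix.sub_mul, hU, sub_zero, Matrix.mul_assoc]
    rw [hC]
    exact hpos.posSemidef.conjTranspose_mul_mul_same _
  have hterm : ∀ i, p i * ((ρ i * E i).trace).re ≤ ((Z * E i).trace).re := fun i => by
    have := aux_trace (hpsd i) (hE.1 i)
    rw [Matrix.sub_mul, Matrix.trace_sub, Matrix.smul_mul, Matrix.trace_smul, smul_eq_mul,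
      Complex.sub_re, Complex.re_ofReal_mul] at this
    linarith
  unfold succProb
  calc _ ≤ ∑ i, ((Z * E i).trace).re := Finset.sum_le_sum fun i _ => hterm i
    _ = (Z.trace).re := by
      rw [← Complex.re_sum, ← Matrix.trace_sum, ← Matrix.mul_sum, hE.2, Matrix.mul_one]
    _ = _ := by
      rw [hZ, Matrix.trace_sum, Complex.re_sum]
      simp [Matrix.trace_smul]
end
end

section
/- Let (p_i, ρ_i)_{i=1}^m be a linearly independent (LI) ensemble on ℂ^n. An m-element POVM (Π_i) maximizes the success probability ∑_{i=1}^m p_i Tr(ρ_i Π_i) over all m-element POVMs if and only if (Π_i) is a projective measurement and Z = ∑_{i=1}^m p_i ρ_i Π_i is positive definite. -/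
open Matrix
open scoped ComplexOrder

noncomputable section

section Helpers

variable {n : ℕ}

lemma trace_mul_outer (A : Matrix (Fin n) (Fin n) ℂ) (x : Fin n → ℂ) :
    (A * vecMulVec x (star x)).trace = star x ⬝ᵥ (A *ᵥ x) := by
  rw [mul_vecMulVec, trace_vecMulVec, dotProduct_comm]

lemma quad_conj (A : Matrix (Fin n) (Fin n) ℂ) (x y : Fin n → ℂ) :
    star x ⬝ᵥ (Aᴴ *ᵥ y) = star (star y ⬝ᵥ (A *ᵥ x)) := by
  rw [← star_dotProduct_star, star_mulVec, star_star, dotProduct_mulVec]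

lemma herm_im (A : Matrix (Fin n) (Fin n) ℂ) (hA : A.IsHermitian) (x : Fin n → ℂ) :
    (star x ⬝ᵥ (A *ᵥ x)).im = 0 := by
  have h := quad_conj A x x
  rw [hA.eq] at h
  have := congrArg Complex.im h
  simp at this
  linarith

lemma psd_of_re (A : Matrix (Fin n) (Fin n) ℂ) (hA : A.IsHermitian)
    (h : ∀ x : Fin n → ℂ, 0 ≤ (star x ⬝ᵥ (A *ᵥ x)).re) : A.PosSemidef := by
  refine .of_dotProduct_mulVec_nonneg hA fun x => ?_
  rw [Complex.le_def]
  exact ⟨h x, (herm_im A hA x).symm⟩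

lemma psd_re {A : Matrix (Fin n) (Fin n) ℂ} (hA : A.PosSemidef) (x : Fin n → ℂ) :
    0 ≤ (star x ⬝ᵥ (A *ᵥ x)).re :=
  (Complex.le_def.1 (hA.dotProduct_mulVec_nonneg x)).1

lemma trace_psd_nonneg {A P : Matrix (Fin n) (Fin n) ℂ} (hA : A.PosSemidef)
    (hP : P.PosSemidef) : 0 ≤ (A * P).trace.re := by
  obtain ⟨l, v, rfl⟩ := Matrix.posSemidef_iff_eq_sum_vecMulVec.1 hP
  rw [Finset.mul_sum, trace_sum, Complex.re_sum]
  refine Finset.sum_nonneg fun i _ => ?_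
  rw [trace_mul_outer]
  exact psd_re hA _

lemma mul_eq_zero_of_trace {A P : Matrix (Fin n) (Fin n) ℂ} (hA : A.PosSemidef)
    (hP : P.PosSemidef) (h : (A * P).trace.re = 0) : A * P = 0 := by
  obtain ⟨l, v, rfl⟩ := Matrix.posSemidef_iff_eq_sum_vecMulVec.1 hP
  rw [Finset.mul_sum, trace_sum, Complex.re_sum] at h
  simp only [trace_mul_outer] at h
  rw [Finset.sum_eq_zero_iff_of_nonneg (fun i _ => psd_re hA _)] at h
  rw [Finset.mul_sum]
  refine Finset.sum_eq_zero fun i hi => ?_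
  have h0 : star (v i) ⬝ᵥ (A *ᵥ (v i)) = 0 := Complex.ext (h i hi) (herm_im A hA.1 _)
  rw [hA.dotProduct_mulVec_zero_iff] at h0
  rw [mul_vecMulVec, h0, zero_vecMulVec]

lemma small_eps {L C s : ℝ} (hs : 0 ≤ s)
    (h : ∀ ε : ℝ, 0 < ε → ε * s ≤ 2 → ε * L + ε ^ 2 * C ≤ 0) : L ≤ 0 := by
  by_contra hL
  push Not at hL
  have hd : 0 < L * s + |C| + L := by positivity
  have hε : 0 < L / (L * s + |C| + L) := by positivity
  have h1 := h _ hε (by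
    rw [div_mul_eq_mul_div, div_le_iff₀ hd]
    nlinarith [abs_nonneg C, mul_nonneg hL.le hs])
  have h2 : L + L / (L * s + |C| + L) * C ≤ 0 := by
    by_contra h3
    push Not at h3
    nlinarith [mul_pos hε h3]
  have h3 : L / (L * s + |C| + L) * |C| < L := by
    rw [div_mul_eq_mul_div, div_lt_iff₀ hd]
    nlinarith [abs_nonneg C, mul_nonneg hL.le hs, mul_pos hL hL,
      mul_nonneg hL.le (mul_nonneg hL.le hs)]
  nlinarith [mul_le_mul_of_nonneg_left (neg_abs_le C) hε.le]

/-- The map `∏ range (P i) → ℂ^n`, sum of components. -/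
def sumMap {m : ℕ} (P : Fin m → Matrix (Fin n) (Fin n) ℂ) :
    ((i : Fin m) → LinearMap.range (P i).mulVecLin) →ₗ[ℂ] (Fin n → ℂ) :=
  ∑ i, (LinearMap.range (P i).mulVecLin).subtype ∘ₗ LinearMap.proj i

lemma sumMap_apply {m : ℕ} (P : Fin m → Matrix (Fin n) (Fin n) ℂ)
    (v : (i : Fin m) → LinearMap.range (P i).mulVecLin) :
    sumMap P v = ∑ i, (v i : Fin n → ℂ) := by
  simp [sumMap]

lemma sumMap_surj {m : ℕ} (P : Fin m → Matrix (Fin n) (Fin n) ℂ) (h : ∑ i, P i = 1) :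
    Function.Surjective (sumMap P) := by
  intro x
  refine ⟨fun i => ⟨P i *ᵥ x, ⟨x, rfl⟩⟩, ?_⟩
  rw [sumMap_apply]
  simp only
  rw [← Matrix.sum_mulVec, h, one_mulVec]

lemma finrank_dom {m : ℕ} (P : Fin m → Matrix (Fin n) (Fin n) ℂ) :
    Module.finrank ℂ ((i : Fin m) → LinearMap.range (P i).mulVecLin) = ∑ i, (P i).rank := by
  rw [Module.finrank_pi_fintype]
  rfl

lemma le_sum_rank {m : ℕ} (P : Fin m → Matrix (Fin n) (Fin n) ℂ) (h : ∑ i, P i = 1) :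
    n ≤ ∑ i, (P i).rank := by
  have := LinearMap.finrank_le_finrank_of_surjective (sumMap_surj P h)
  rwa [finrank_dom, Module.finrank_fin_fun] at this

lemma proj_of_rank {m : ℕ} (P : Fin m → Matrix (Fin n) (Fin n) ℂ) (h : ∑ i, P i = 1)
    (hr : ∑ i, (P i).rank = n) (i j : Fin m) :
    P i * P j = if i = j then P j else 0 := by
  have hinj : Function.Injective (sumMap P) := by
    rw [LinearMap.injective_iff_surjective_of_finrank_eq_finrank]
    · exact sumMap_surj P h
    · rw [finrank_dom, Module.finrank_fin_fun, hr]
  apply Matrix.ext_of_mulVec_single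
  intro c
  generalize (Pi.single c 1 : Fin n → ℂ) = x
  have key : (fun i => (⟨P i *ᵥ (P j *ᵥ x), ⟨_, rfl⟩⟩ : LinearMap.range (P i).mulVecLin))
      = Pi.single j ⟨P j *ᵥ x, ⟨_, rfl⟩⟩ := by
    apply hinj
    rw [sumMap_apply, sumMap_apply]
    simp only
    rw [← Matrix.sum_mulVec, h, one_mulVec, Finset.sum_eq_single j]
    · simp
    · intro b _ hb
      simp [Pi.single_eq_of_ne hb]
    · simp
  have := congrArg Subtype.val (congrFun key i)
  simp only at this
  rw [← mulVec_mulVec, this]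
  split_ifs with hij
  · subst hij; simp
  · simp [Pi.single_eq_of_ne hij]

lemma rank_eq {m : ℕ} (A P : Fin m → Matrix (Fin n) (Fin n) ℂ) (h : ∑ i, P i = 1)
    (hA : ∑ i, (A i).rank = n) (Z : Matrix (Fin n) (Fin n) ℂ) (hZ : IsUnit Z)
    (hZP : ∀ i, Z * P i = A i * P i) (i : Fin m) : (P i).rank = (A i).rank := by
  have hle : ∀ i, (P i).rank ≤ (A i).rank := fun i => by
    rw [← rank_mul_eq_right_of_isUnit_det Z (P i) ((isUnit_iff_isUnit_det Z).1 hZ), hZP]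
    exact rank_mul_le_left _ _
  have h1 := le_sum_rank P h
  have h2 : ∑ i, (P i).rank = ∑ i, (A i).rank :=
    le_antisymm (Finset.sum_le_sum fun i _ => hle i) (by omega)
  exact (Finset.sum_eq_sum_iff_of_le fun i _ => hle i).1 h2 i (Finset.mem_univ _)

/-- First-order optimality condition. -/
lemma variation {m : ℕ} (A P : Fin m → Matrix (Fin n) (Fin n) ℂ) (hA : ∀ i, (A i).IsHermitian)
    (hP : IsPOVM P)
    (hopt : ∀ E, IsPOVM E → ∑ i, (A i * E i).trace.re ≤ ∑ i, (A i * P i).trace.re)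
    (k : Fin m) (x : Fin n → ℂ) :
    (star x ⬝ᵥ (A k *ᵥ x)).re ≤ (star x ⬝ᵥ ((∑ i, A i * P i) *ᵥ x)).re := by
  obtain ⟨s, hs0, hs⟩ : ∃ s : ℝ, 0 ≤ s ∧ star x ⬝ᵥ x = (s : ℂ) := by
    have h0 : 0 ≤ star x ⬝ᵥ x := dotProduct_star_self_nonneg x
    rw [Complex.le_def] at h0
    exact ⟨(star x ⬝ᵥ x).re, h0.1, Complex.ext rfl (by simpa using h0.2.symm)⟩
  set X := vecMulVec x (star x) with hX
  have hXpsd : X.PosSemidef := posSemidef_vecMulVec_self_star x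
  have hXX : X * X = (s : ℂ) • X := by
    rw [hX, vecMulVec_mul_vecMulVec, hs, vecMulVec_smul]
  rw [← trace_mul_outer, ← trace_mul_outer, ← hX]
  have hre : ∀ i, (A i * (X * P i)).trace.re = (A i * P i * X).trace.re := fun i => by
    have : (A i * (X * P i)).trace = star ((A i * P i * X).trace) := by
      rw [← trace_conjTranspose]
      simp only [conjTranspose_mul, (hA i).eq, (hP.1 i).1.eq, hXpsd.1.eq]
      rw [trace_mul_comm, Matrix.mul_assoc]
    rw [this]; simp
  have main := small_eps (s := s)
    (L := 2 * (A k * X).trace.re - 2 * ((∑ i, A i * P i) * X).trace.re)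
    (C := ∑ i, (A i * (X * P i * X)).trace.re - s * (A k * X).trace.re) hs0 ?_
  · linarith
  intro ε hε hεs
  have hE : IsPOVM (fun i => (1 - (ε : ℂ) • X) * P i * (1 - (ε : ℂ) • X)
      + if i = k then ((2 * ε - ε ^ 2 * s : ℝ) : ℂ) • X else 0) := by
    have hh : (1 - (ε : ℂ) • X)ᴴ = 1 - (ε : ℂ) • X := by
      simp [hXpsd.1.eq]
    constructor
    · intro i
      refine PosSemidef.add ?_ ?_
      · have := (hP.1 i).mul_mul_conjTranspose_same (1 - (ε : ℂ) • X)
        rwa [hh] at this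
      · split_ifs
        · refine hXpsd.smul ?_
          rw [Complex.zero_le_real]
          nlinarith
        · exact PosSemidef.zero
    · rw [Finset.sum_add_distrib, ← Finset.sum_mul, ← Finset.mul_sum, hP.2]
      simp only [Finset.sum_ite_eq', Finset.mem_univ, if_true, Matrix.mul_one]
      simp only [Matrix.sub_mul, Matrix.mul_sub, Matrix.one_mul, Matrix.mul_one, smul_mul_assoc,
        mul_smul_comm, hXX]
      push_cast
      module
  have h := hopt _ hE
  have hexp : ∀ i, (A i * ((1 - (ε : ℂ) • X) * P i * (1 - (ε : ℂ) • X)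
      + if i = k then ((2 * ε - ε ^ 2 * s : ℝ) : ℂ) • X else 0)).trace.re
      = (A i * P i).trace.re - 2 * ε * (A i * P i * X).trace.re
        + ε ^ 2 * (A i * (X * P i * X)).trace.re
        + if i = k then (2 * ε - ε ^ 2 * s) * (A i * X).trace.re else 0 := by
    intro i
    have e1 : A i * ((1 - (ε : ℂ) • X) * P i * (1 - (ε : ℂ) • X))
        = A i * P i - (ε : ℂ) • (A i * (X * P i)) - (ε : ℂ) • (A i * P i * X)
          + (ε : ℂ) • (ε : ℂ) • (A i * (X * P i * X)) := by
      simp only [Matrix.sub_mul, Matrix.mul_sub, Matrix.one_mul, Matrix.mul_one, smul_mul_assoc,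
        mul_smul_comm, Matrix.mul_assoc]
      module
    rw [Matrix.mul_add, e1]
    simp only [trace_add, trace_sub, trace_smul, Complex.add_re, Complex.sub_re, smul_eq_mul,
      Complex.re_ofReal_mul, hre]
    split_ifs
    · simp only [mul_smul_comm, trace_smul, smul_eq_mul, Complex.re_ofReal_mul]
      ring
    · simp
      ring
  simp only [hexp, Finset.sum_add_distrib, Finset.sum_sub_distrib, ← Finset.mul_sum,
    Finset.sum_ite_eq', Finset.mem_univ, if_true] at h
  rw [Finset.sum_mul, trace_sum, Complex.re_sum]
  linarith

lemma holevo {m : ℕ} (A P : Fin m → Matrix (Fin n) (Fin n) ℂ) (hA : ∀ i, (A i).IsHermitian)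
    (hP : IsPOVM P)
    (hopt : ∀ E, IsPOVM E → ∑ i, (A i * E i).trace.re ≤ ∑ i, (A i * P i).trace.re) :
    (∀ k, (∑ i, A i * P i - A k).PosSemidef) ∧ ∀ k, (∑ i, A i * P i) * P k = A k * P k := by
  have hv := variation A P hA hP hopt
  set Z := ∑ i, A i * P i with hZ
  set H : Matrix (Fin n) (Fin n) ℂ := (1 / 2 : ℂ) • (Z + Zᴴ) with hH
  have hHh : H.IsHermitian := by
    rw [IsHermitian, hH, conjTranspose_smul, conjTranspose_add, conjTranspose_conjTranspose,
      add_comm]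
    simp
  have hpsd : ∀ k, (H - A k).PosSemidef := fun k => by
    refine psd_of_re _ (hHh.sub (hA k)) fun x => ?_
    have h1 := hv k x
    have h2 := congrArg Complex.re (quad_conj Z x x)
    rw [sub_mulVec, dotProduct_sub, hH, smul_mulVec, add_mulVec, dotProduct_smul, dotProduct_add]
    simp at h2 ⊢
    linarith
  have htr : ∑ k, ((H - A k) * P k).trace.re = 0 := by
    simp only [Matrix.sub_mul, trace_sub, Complex.sub_re, Finset.sum_sub_distrib]
    rw [← Complex.re_sum, ← Complex.re_sum, ← trace_sum, ← trace_sum, ← Finset.mul_sum, hP.2,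
      ← hZ, Matrix.mul_one, hH, trace_smul, trace_add, trace_conjTranspose]
    simp
    ring
  rw [Finset.sum_eq_zero_iff_of_nonneg (fun i _ => trace_psd_nonneg (hpsd i) (hP.1 i))] at htr
  have hz : ∀ k, H * P k = A k * P k := fun k => by
    have := mul_eq_zero_of_trace (hpsd k) (hP.1 k) (htr k (Finset.mem_univ _))
    rwa [Matrix.sub_mul, sub_eq_zero] at this
  have hHZ : H = Z := by
    rw [hZ, ← Finset.sum_congr rfl (fun k _ => hz k), ← Finset.mul_sum, hP.2, Matrix.mul_one]
  rw [← hHZ]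
  exact ⟨hpsd, hz⟩

lemma psd_sub_of_proj {A P Z : Matrix (Fin n) (Fin n) ℂ} (hA : A.IsHermitian) (hZ : Z.PosDef)
    (hZP : Z * P = A * P) (hr : P.rank = A.rank) : (Z - A).PosSemidef := by
  refine psd_of_re _ (hZ.1.sub hA) fun x => ?_
  have hrange : LinearMap.range (A * P).mulVecLin = LinearMap.range A.mulVecLin := by
    apply Submodule.eq_of_le_of_finrank_eq
    · rw [mulVecLin_mul]
      exact LinearMap.range_comp_le_range _ _
    · change (A * P).rank = A.rank
      rw [← hZP, rank_mul_eq_right_of_isUnit_det Z P ((isUnit_iff_isUnit_det Z).1 hZ.isUnit), hr]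
  have hx : A *ᵥ x ∈ LinearMap.range (A * P).mulVecLin := by
    rw [hrange]; exact ⟨x, rfl⟩
  obtain ⟨y, hy⟩ := hx
  rw [mulVecLin_apply] at hy
  obtain ⟨u, hu⟩ : ∃ u, u = P *ᵥ y := ⟨_, rfl⟩
  have h1 : A *ᵥ u = A *ᵥ x := by rw [hu, mulVec_mulVec, hy]
  have h2 : Z *ᵥ u = A *ᵥ x := by rw [hu, mulVec_mulVec, hZP, hy]
  have h3 := psd_re hZ.posSemidef (x - u)
  have c1 := quad_conj A u x
  have c2 := quad_conj Z u x
  rw [hA.eq] at c1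
  rw [hZ.1.eq, h2] at c2
  rw [h1] at c1
  rw [mulVec_sub, star_sub, sub_dotProduct, dotProduct_sub, dotProduct_sub, h2] at h3
  have cre1 := congrArg Complex.re c1
  have cre2 := congrArg Complex.re c2
  rw [sub_mulVec, dotProduct_sub]
  simp at cre1 cre2 h3 ⊢
  linarith

end Helpers

/-- For an LI ensemble, a POVM is optimal iff it is a projective measurement and
`Z = ∑ pᵢρᵢΠᵢ` is positive definite. -/
theorem stmt_9 {m n : ℕ} (p : Fin m → ℝ) (ρ : Fin m → Matrix (Fin n) (Fin n) ℂ)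
    (hens : IsLIEnsemble p ρ)
    (P : Fin m → Matrix (Fin n) (Fin n) ℂ) (hP : IsPOVM P) :
    IsOptimal p ρ P ↔
      (IsProjectiveMeasurement P ∧ (∑ i, (p i : ℂ) • (ρ i * P i)).PosDef) := by
  classical
  obtain ⟨⟨hp, -, hρ, -⟩, hrk, hspan⟩ := hens
  obtain ⟨A, hAdef⟩ : ∃ A : Fin m → Matrix (Fin n) (Fin n) ℂ, A = fun i => (p i : ℂ) • ρ i :=
    ⟨_, rfl⟩
  have hpsd : ∀ i, (A i).PosSemidef := fun i => by
    rw [hAdef]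
    exact (hρ i).smul (Complex.zero_le_real.2 (hp i).le)
  have hrkA : ∑ i, (A i).rank = n := by
    refine Eq.trans ?_ hrk
    refine Finset.sum_congr rfl fun i _ => ?_
    rw [hAdef]
    exact rank_smul_of_mem_nonZeroDivisors _ (mem_nonZeroDivisors_of_ne_zero
      (Complex.ofReal_ne_zero.2 (hp i).ne'))
  have hsucc : ∀ E, succProb p ρ E = ∑ i, (A i * E i).trace.re := fun E => by
    simp only [succProb, hAdef]
    refine Finset.sum_congr rfl fun i _ => ?_
    rw [smul_mul_assoc, trace_smul, smul_eq_mul, Complex.re_ofReal_mul]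
  have hZeq : ∑ i, (p i : ℂ) • (ρ i * P i) = ∑ i, A i * P i := by
    simp only [hAdef, smul_mul_assoc]
  rw [hZeq]
  simp only [IsOptimal, hsucc]
  constructor
  · rintro ⟨-, hopt⟩
    obtain ⟨hge, hZP⟩ := holevo A P (fun i => (hpsd i).1) hP hopt
    set Z := ∑ i, A i * P i with hZ
    have hZh : Z.IsHermitian := by
      rcases isEmpty_or_nonempty (Fin m) with he | ⟨⟨k⟩⟩
      · rw [hZ, Finset.univ_eq_empty, Finset.sum_empty]
        exact isHermitian_zero
      · have := (hge k).1.add (hpsd k).1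
        rwa [sub_add_cancel] at this
    have hZpd : Z.PosDef := by
      refine .of_dotProduct_mulVec_pos hZh fun x hx => ?_
      rw [Complex.lt_def]
      refine ⟨?_, (herm_im Z hZh x).symm⟩
      simp only [Complex.zero_re]
      by_contra hneg
      push Not at hneg
      have hk : ∀ k, ρ k *ᵥ x = 0 := fun k => by
        have h1 := psd_re (hge k) x
        rw [sub_mulVec, dotProduct_sub, Complex.sub_re] at h1
        have h2 := psd_re (hpsd k) x
        have h3 : star x ⬝ᵥ (A k *ᵥ x) = 0 :=
          Complex.ext (by simp only [Complex.zero_re]; linarith) (herm_im _ (hpsd k).1 x)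
        rw [(hpsd k).dotProduct_mulVec_zero_iff] at h3
        simp only [hAdef, smul_mulVec] at h3
        exact (smul_eq_zero.1 h3).resolve_left (Complex.ofReal_ne_zero.2 (hp k).ne')
      let φ : (Fin n → ℂ) →ₗ[ℂ] ℂ := dotProductBilin ℂ ℂ (star x)
      have hker : (⨆ i, LinearMap.range (ρ i).mulVecLin) ≤ LinearMap.ker φ := by
        refine iSup_le fun i => ?_
        rintro _ ⟨y, rfl⟩
        change star x ⬝ᵥ (ρ i *ᵥ y) = 0
        have := quad_conj (ρ i) x y
        rw [(hρ i).1.eq, hk i] at this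
        simpa using this
      rw [hspan] at hker
      have h0 : star x ⬝ᵥ x = 0 := hker (Submodule.mem_top (x := x))
      exact hx (dotProduct_star_self_eq_zero.1 h0)
    have hrP := rank_eq A P hP.2 hrkA Z hZpd.isUnit hZP
    have hpr := proj_of_rank P hP.2 (by simp only [hrP, hrkA])
    exact ⟨⟨fun i j hij => by rw [hpr, if_neg hij], fun i => by rw [hpr, if_pos rfl],
      fun i => (hP.1 i).1, hP.2⟩, hZpd⟩
  · rintro ⟨⟨horth, hid, -, hsum⟩, hZ⟩
    refine ⟨hP, fun E hE => ?_⟩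
    have hZP : ∀ k, (∑ i, A i * P i) * P k = A k * P k := fun k => by
      rw [Finset.sum_mul, Finset.sum_eq_single k]
      · rw [Matrix.mul_assoc, hid]
      · intro b _ hb
        rw [Matrix.mul_assoc, horth b k hb, Matrix.mul_zero]
      · simp
    have hrP := rank_eq A P hsum hrkA _ hZ.isUnit hZP
    have hge := fun k => psd_sub_of_proj (hpsd k).1 hZ (hZP k) (hrP k)
    have h := Finset.sum_nonneg fun k (_ : k ∈ Finset.univ) =>
      trace_psd_nonneg (hge k) (hE.1 k)
    simp only [Matrix.sub_mul, trace_sub, Complex.sub_re, Finset.sum_sub_distrib] at h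
    rw [← Complex.re_sum (f := fun k => ((∑ i, A i * P i) * E k).trace), ← trace_sum,
      ← Finset.mul_sum, hE.2, Matrix.mul_one, trace_sum, Complex.re_sum] at h
    linarith
end
end

section
/- Let (p_i, ρ_i)_{i=1}^m be a linearly independent (LI) ensemble on ℂ^n and let (Π_i) be a projective measurement. If Z = ∑_{k=1}^m p_k ρ_k Π_k is positive definite, then Z − p_iρ_i is positive semidefinite for every i. -/
open Matrix
open scoped ComplexOrder

noncomputable section

/-- For an LI ensemble and a projective measurement `P`: if `Z = ∑ pₖρₖΠₖ` is positive
definite then `Z - pᵢρᵢ` is positive semidefinite for every `i`. -/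
theorem stmt_10 {m n : ℕ} (p : Fin m → ℝ) (ρ : Fin m → Matrix (Fin n) (Fin n) ℂ)
    (hens : IsLIEnsemble p ρ)
    (P : Fin m → Matrix (Fin n) (Fin n) ℂ) (hP : IsProjectiveMeasurement P)
    (Z : Matrix (Fin n) (Fin n) ℂ) (hZ : Z = ∑ k, (p k : ℂ) • (ρ k * P k))
    (hpos : Z.PosDef) :
    ∀ i, (Z - (p i : ℂ) • ρ i).PosSemidef := by
  obtain ⟨⟨hp, -, hρ, -⟩, hrank, -⟩ := hens
  obtain ⟨hP0, hPP, hPh, hP1⟩ := hP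
  have hdet : IsUnit Z.det := (Matrix.isUnit_iff_isUnit_det Z).1 hpos.isUnit
  -- `Z Π_k = p_k ρ_k Π_k`
  have hZP : ∀ k, Z * P k = (ρ k * ((p k : ℂ) • P k)) := by
    intro k
    rw [hZ, Finset.sum_mul, Finset.sum_eq_single k]
    · rw [Matrix.smul_mul, Matrix.mul_assoc, hPP, Matrix.mul_smul]
    · intro j _ hj
      rw [Matrix.smul_mul, Matrix.mul_assoc, hP0 j k hj, Matrix.mul_zero, smul_zero]
    · simp
  have hrZ : ∀ k, (Z * P k).rank = (P k).rank := fun k =>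
    Matrix.rank_mul_eq_right_of_isUnit_det Z (P k) hdet
  have hle : ∀ k, (P k).rank ≤ (ρ k).rank := by
    intro k
    rw [← hrZ k, hZP k]
    exact Matrix.rank_mul_le_left _ _
  have hsum : n ≤ ∑ k, (P k).rank := by
    have hadd : ∀ B C : Matrix (Fin n) (Fin n) ℂ, (B + C).rank ≤ B.rank + C.rank := by
      intro B C
      have hs : LinearMap.range (B + C).mulVecLin ≤
          LinearMap.range B.mulVecLin ⊔ LinearMap.range C.mulVecLin := by
        rintro _ ⟨x, rfl⟩
        rw [Matrix.mulVecLin_add, LinearMap.add_apply]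
        exact Submodule.add_mem_sup ⟨x, rfl⟩ ⟨x, rfl⟩
      exact (Submodule.finrank_mono hs).trans
        (Submodule.finrank_add_le_finrank_add_finrank _ _)
    have key : ∀ s : Finset (Fin m), (∑ k ∈ s, P k).rank ≤ ∑ k ∈ s, (P k).rank := by
      intro s
      induction s using Finset.induction_on with
      | empty => simp
      | insert a s ha ih =>
        rw [Finset.sum_insert ha, Finset.sum_insert ha]
        exact (hadd _ _).trans (by omega)
    have := key Finset.univ
    rw [hP1, Matrix.rank_one, Fintype.card_fin] at this
    exact this
  have heq : ∀ k, (P k).rank = (ρ k).rank := by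
    have h1 : ∑ k, (P k).rank = ∑ k, (ρ k).rank :=
      le_antisymm (Finset.sum_le_sum fun k _ => hle k) (by rw [hrank]; exact hsum)
    intro k
    exact (Finset.sum_eq_sum_iff_of_le fun k _ => hle k).1 h1 k (Finset.mem_univ k)
  intro i
  have hrange : LinearMap.range (Z * P i).mulVecLin = LinearMap.range (ρ i).mulVecLin := by
    apply Submodule.eq_of_le_of_finrank_eq
    · rw [hZP i, Matrix.mulVecLin_mul]
      exact LinearMap.range_comp_le_range _ _
    · exact (hrZ i).trans (heq i)
  set A : Matrix (Fin n) (Fin n) ℂ := (p i : ℂ) • ρ i with hA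
  have hAP : A * P i = Z * P i := by
    rw [hZP i, hA, Matrix.smul_mul, Matrix.mul_smul]
  have hAh : A.IsHermitian := by
    change Aᴴ = A
    rw [hA, Matrix.conjTranspose_smul, (hρ i).isHermitian.eq]
    simp
  have hPW : P i * (Z⁻¹ * A) = Z⁻¹ * A := by
    apply Matrix.ext_of_mulVec_single
    intro j
    set x : Fin n → ℂ := Pi.single j 1
    have hm : (ρ i).mulVecLin ((p i : ℂ) • x) ∈ LinearMap.range (Z * P i).mulVecLin := by
      rw [hrange]
      exact ⟨_, rfl⟩
    obtain ⟨y, hy⟩ := hm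
    have hy' : A *ᵥ x = (Z * P i) *ᵥ y := by
      simp only [Matrix.mulVecLin_apply] at hy
      rw [hy, hA, Matrix.smul_mulVec, Matrix.mulVec_smul]
    have h2 : (Z⁻¹ * A) *ᵥ x = P i *ᵥ y := by
      rw [← Matrix.mulVec_mulVec, hy', Matrix.mulVec_mulVec, Matrix.nonsing_inv_mul_cancel_left _ _ hdet]
    rw [← Matrix.mulVec_mulVec, h2, Matrix.mulVec_mulVec, hPP]
  have hAZA : A * (Z⁻¹ * A) = A := by
    calc A * (Z⁻¹ * A) = (A * P i) * (Z⁻¹ * A) := by rw [Matrix.mul_assoc, hPW]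
      _ = Z * (P i * (Z⁻¹ * A)) := by rw [hAP, Matrix.mul_assoc]
      _ = A := by rw [hPW, Matrix.mul_nonsing_inv_cancel_left _ _ hdet]
  have hfin : Z - A = (1 - Z⁻¹ * A)ᴴ * Z * (1 - Z⁻¹ * A) := by
    rw [Matrix.conjTranspose_sub, Matrix.conjTranspose_mul, Matrix.conjTranspose_nonsing_inv,
      hpos.isHermitian.eq, hAh.eq, Matrix.conjTranspose_one, Matrix.sub_mul,
      Matrix.nonsing_inv_mul_cancel_right _ _ hdet, Matrix.one_mul, Matrix.mul_sub,
      Matrix.mul_one, Matrix.sub_mul, Matrix.mul_nonsing_inv_cancel_left _ _ hdet, hAZA]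
    abel
  rw [hfin]
  exact hpos.posSemidef.conjTranspose_mul_mul_same _
end
end

section
/- Let (q_i, σ_i)_{i=1}^m be a linearly independent (LI) ensemble on ℂ^n with r_i = rank σ_i. Then S = ∑_j q_jσ_j is positive definite, and the pretty good measurement elements Ω_i = S^{-1/2} q_iσ_i S^{-1/2} form a projective measurement with rank Ω_i = r_i for every i: Ω_iΩ_j = 0 for i ≠ j, Ω_i² = Ω_i = Ω_i*, and ∑_i Ω_i = I. -/
open Matrix
open scoped ComplexOrder

noncomputable section

/-- Matrices summing to the identity with ranks summing to `n` are orthogonal idempotents. -/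
theorem mul_eq_ite_of_sum_rank {m n : ℕ} (P : Fin m → Matrix (Fin n) (Fin n) ℂ)
    (hsum : ∑ i, P i = 1) (hr : ∑ i, (P i).rank = n) (i j : Fin m) :
    P j * P i = if j = i then P i else 0 := by
  classical
  let f : ((k : Fin m) → LinearMap.range (P k).mulVecLin) →ₗ[ℂ] (Fin n → ℂ) :=
    ∑ k, (LinearMap.range (P k).mulVecLin).subtype ∘ₗ LinearMap.proj k
  have hf : ∀ w, f w = ∑ k, (w k : Fin n → ℂ) := by
    intro w
    simp [f, LinearMap.sum_apply]
  let g : (v : Fin n → ℂ) → ((k : Fin m) → LinearMap.range (P k).mulVecLin) :=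
    fun v k => ⟨P k *ᵥ v, ⟨v, rfl⟩⟩
  have hg : ∀ v, f (g v) = v := by
    intro v
    rw [hf]
    simp only [g]
    rw [← Matrix.sum_mulVec, hsum, Matrix.one_mulVec]
  have hdim : Module.finrank ℂ ((k : Fin m) → LinearMap.range (P k).mulVecLin)
      = Module.finrank ℂ (Fin n → ℂ) := by
    rw [Module.finrank_pi_fintype, Module.finrank_fin_fun]
    exact hr
  have hinj : Function.Injective f :=
    (LinearMap.injective_iff_surjective_of_finrank_eq_finrank hdim).mpr fun v => ⟨g v, hg v⟩
  have key : ∀ v, P j *ᵥ (P i *ᵥ v) = if j = i then P i *ᵥ v else 0 := by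
    intro v
    let w : (k : Fin m) → LinearMap.range (P k).mulVecLin :=
      fun k => if k = i then g v k else 0
    have hw : f w = P i *ᵥ v := by
      rw [hf, Finset.sum_eq_single i]
      · simp [w, g]
      · intro b _ hb
        simp [w, hb]
      · simp
    have h := congrFun (hinj ((hg (P i *ᵥ v)).trans hw.symm)) j
    have h2 := congrArg Subtype.val h
    by_cases hji : j = i
    · subst hji
      simpa [w, g] using h2
    · simpa [w, g, hji] using h2
  apply Matrix.ext_of_mulVec_single
  intro k
  rw [← Matrix.mulVec_mulVec, key]
  split_ifs
  · rfl
  · rw [Matrix.zero_mulVec]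

/-- For an LI ensemble `(q, σ)`: `S = ∑ qⱼσⱼ` is positive definite, and the pretty good
measurement elements `Ωᵢ = S^{-1/2} qᵢσᵢ S^{-1/2}` form a projective measurement with
`rank Ωᵢ = rank σᵢ` for every `i`. -/
theorem stmt_11 {m n : ℕ} (q : Fin m → ℝ) (σ : Fin m → Matrix (Fin n) (Fin n) ℂ)
    (hens : IsLIEnsemble q σ) :
    (∑ j, (q j : ℂ) • σ j).PosDef ∧
    ∀ R : Matrix (Fin n) (Fin n) ℂ, R.PosDef → R * R = ∑ j, (q j : ℂ) • σ j →
      (∀ i j, i ≠ j →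
        (R⁻¹ * ((q i : ℂ) • σ i) * R⁻¹) * (R⁻¹ * ((q j : ℂ) • σ j) * R⁻¹) = 0) ∧
      (∀ i, (R⁻¹ * ((q i : ℂ) • σ i) * R⁻¹) * (R⁻¹ * ((q i : ℂ) • σ i) * R⁻¹) =
        R⁻¹ * ((q i : ℂ) • σ i) * R⁻¹) ∧
      (∀ i, (R⁻¹ * ((q i : ℂ) • σ i) * R⁻¹).IsHermitian) ∧
      (∀ i, (R⁻¹ * ((q i : ℂ) • σ i) * R⁻¹).rank = (σ i).rank) ∧
      ∑ i, R⁻¹ * ((q i : ℂ) • σ i) * R⁻¹ = 1 := by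
  classical
  obtain ⟨⟨hq, -, hσ, -⟩, hrank, hspan⟩ := hens
  have hA : ∀ i, ((q i : ℂ) • σ i).PosSemidef := fun i =>
    (hσ i).smul (by exact_mod_cast (hq i).le)
  have hqne : ∀ i, (q i : ℂ) ≠ 0 := fun i => by exact_mod_cast (hq i).ne'
  have hS : (∑ j, (q j : ℂ) • σ j).PosSemidef :=
    Matrix.posSemidef_sum _ fun i _ => hA i
  refine ⟨?_, ?_⟩
  · refine Matrix.PosDef.of_dotProduct_mulVec_pos hS.1 fun x hx => ?_
    refine lt_of_le_of_ne (hS.dotProduct_mulVec_nonneg x) fun h0 => hx ?_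
    rw [Matrix.sum_mulVec, dotProduct_sum] at h0
    have h1 := (Finset.sum_eq_zero_iff_of_nonneg
      fun i _ => (hA i).dotProduct_mulVec_nonneg x).mp h0.symm
    have h2 : ∀ i, σ i *ᵥ x = 0 := by
      intro i
      have h3 := ((hA i).dotProduct_mulVec_zero_iff x).mp (h1 i (Finset.mem_univ i))
      rw [Matrix.smul_mulVec] at h3
      exact (smul_eq_zero.mp h3).resolve_left (hqne i)
    have h4 : (⨆ i, LinearMap.range (σ i).mulVecLin)
        ≤ LinearMap.ker (dotProductBilin ℂ ℂ (star x)) := by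
      refine iSup_le fun i => ?_
      rintro _ ⟨v, rfl⟩
      have h5 : star x ᵥ* σ i = 0 := by
        have := congrArg star (h2 i)
        rw [Matrix.star_mulVec, (hσ i).1.eq] at this
        simpa using this
      change star x ⬝ᵥ (σ i *ᵥ v) = 0
      rw [Matrix.dotProduct_mulVec, h5, zero_dotProduct]
    rw [hspan] at h4
    have h6 : star x ⬝ᵥ x = 0 := h4 (Submodule.mem_top (x := x))
    exact dotProduct_star_self_eq_zero.mp h6
  · intro R hR hRR
    have hdet : IsUnit R.det := (Matrix.isUnit_iff_isUnit_det R).mp hR.isUnit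
    have hdet' : IsUnit R⁻¹.det := (Matrix.isUnit_iff_isUnit_det _).mp hR.inv.isUnit
    have hrk : ∀ i, (R⁻¹ * ((q i : ℂ) • σ i) * R⁻¹).rank = (σ i).rank := by
      intro i
      rw [Matrix.rank_mul_eq_left_of_isUnit_det _ _ hdet',
        Matrix.rank_mul_eq_right_of_isUnit_det _ _ hdet',
        Matrix.rank_smul_of_mem_nonZeroDivisors _ (mem_nonZeroDivisors_of_ne_zero (hqne i))]
    have hsum : ∑ i, R⁻¹ * ((q i : ℂ) • σ i) * R⁻¹ = 1 := by
      rw [← Finset.sum_mul, ← Finset.mul_sum, ← hRR, ← mul_assoc,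
        Matrix.nonsing_inv_mul _ hdet, one_mul, Matrix.mul_nonsing_inv _ hdet]
    have key := mul_eq_ite_of_sum_rank (fun i => R⁻¹ * ((q i : ℂ) • σ i) * R⁻¹) hsum
      (by simp only [hrk]; exact hrank)
    refine ⟨fun i j hij => ?_, fun i => ?_, fun i => ?_, hrk, hsum⟩
    · exact (key j i).trans (if_neg hij)
    · exact (key i i).trans (if_pos rfl)
    · have := Matrix.isHermitian_mul_mul_conjTranspose R⁻¹ (hA i).1
      rwa [hR.inv.1.eq] at this
end
end

section
/- Let x_1,…,x_n be a basis of ℂ^n, let Γ be its n×n Gram matrix with entries Γ_{jk} = ⟨x_j, x_k⟩ (inner product conjugate-linear in the first argument), let Γ^{1/2} be the unique positive definite square root of Γ, and let u_1,…,u_n be the dual basis determined by ⟨x_j, u_k⟩ = δ_{jk}. Then S = ∑_k x_k x_k* (sum of outer products) is positive definite and S^{-1/2} = ∑_{j,k} (Γ^{1/2})_{jk} u_j u_k*. -/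
open Matrix
open scoped ComplexOrder

noncomputable section

section aux
open scoped MatrixOrder Matrix.Norms.L2Operator

/-- Uniqueness of positive semidefinite square roots. -/
theorem psd_sqrt_unique_aux {n : ℕ} (A B : Matrix (Fin n) (Fin n) ℂ)
    (hA : A.PosSemidef) (hB : B.PosSemidef) (h : A * A = B * B) : A = B :=
  (CFC.mul_self_eq_mul_self_iff A B (Matrix.nonneg_iff_posSemidef.mpr hA)
    (Matrix.nonneg_iff_posSemidef.mpr hB)).mp h

end aux

/-- For a basis `x₁, …, xₙ` of `ℂ^n` with Gram matrix `Γ` and dual basis `u₁, …, uₙ`: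
`S = ∑ xₖxₖ*` is positive definite and `S^{-1/2} = ∑ (Γ^{1/2})ⱼₖ uⱼuₖ*`. -/
theorem stmt_12 {n : ℕ} (x : Fin n → (Fin n → ℂ))
    (hli : LinearIndependent ℂ x) (hsp : Submodule.span ℂ (Set.range x) = ⊤)
    (u : Fin n → (Fin n → ℂ))
    (hu : ∀ j k, star (x j) ⬝ᵥ u k = if j = k then 1 else 0)
    (Γ : Matrix (Fin n) (Fin n) ℂ) (hΓ : ∀ j k, Γ j k = star (x j) ⬝ᵥ x k) :
    (∑ k, outer (x k)).PosDef ∧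
    ∀ Rs RΓ : Matrix (Fin n) (Fin n) ℂ,
      Rs.PosDef → Rs * Rs = ∑ k, outer (x k) →
      RΓ.PosDef → RΓ * RΓ = Γ →
      Rs⁻¹ = ∑ j, ∑ k, RΓ j k • Matrix.vecMulVec (u j) (star (u k)) := by
  let X : Matrix (Fin n) (Fin n) ℂ := Matrix.of fun i k => x k i
  let U : Matrix (Fin n) (Fin n) ℂ := Matrix.of fun i k => u k i
  have hS : ∑ k, outer (x k) = X * Xᴴ := by
    ext i j
    simp [outer, Matrix.sum_apply, Matrix.vecMulVec_apply, Matrix.mul_apply, X]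
  have hG : Γ = Xᴴ * X := by
    ext i j
    simp [hΓ, dotProduct, Matrix.mul_apply, X]
  have hXU : Xᴴ * U = 1 := by
    ext i j
    have := hu i j
    simpa [dotProduct, Matrix.mul_apply, X, U, Matrix.one_apply] using this
  have hUX : U * Xᴴ = 1 := mul_eq_one_comm.mp hXU
  have hXU' : X * Uᴴ = 1 := by
    have := congrArg Matrix.conjTranspose hUX
    simpa using this
  have hUX' : Uᴴ * X = 1 := mul_eq_one_comm.mp hXU'
  have hSpd : (∑ k, outer (x k)).PosDef := by
    have hps : (X * Xᴴ).PosSemidef := Matrix.posSemidef_self_mul_conjTranspose X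
    rw [hS]
    refine hps.posDef_iff_isUnit.mpr ?_
    exact (IsUnit.of_mul_eq_one _ hXU').mul (IsUnit.of_mul_eq_one _ hXU)
  refine ⟨hSpd, ?_⟩
  intro Rs R hRs hRs2 hR hR2
  have hT : ∑ j, ∑ k, R j k • Matrix.vecMulVec (u j) (star (u k)) = U * R * Uᴴ := by
    ext i l
    simp only [Matrix.sum_apply, Matrix.smul_apply, Matrix.vecMulVec_apply, Matrix.mul_apply,
      Finset.sum_mul, Matrix.conjTranspose_apply, U, Matrix.of_apply, Pi.star_apply, smul_eq_mul]
    rw [Finset.sum_comm]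
    refine Finset.sum_congr rfl fun j _ => Finset.sum_congr rfl fun k _ => ?_
    ring
  have hRu : IsUnit R.det := (Matrix.isUnit_iff_isUnit_det R).mp hR.isUnit
  have hRi : R⁻¹ * R = 1 := Matrix.nonsing_inv_mul R hRu
  have hRi' : R * R⁻¹ = 1 := Matrix.mul_nonsing_inv R hRu
  have hV : Rs = X * R⁻¹ * Xᴴ := by
    refine psd_sqrt_unique_aux _ _ hRs.posSemidef
      (hR.inv.posSemidef.mul_mul_conjTranspose_same X) ?_
    rw [hRs2, hS]
    calc X * Xᴴ = X * (R⁻¹ * R) * (R * R⁻¹) * Xᴴ := by rw [hRi, hRi']; simp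
      _ = X * R⁻¹ * (R * R) * R⁻¹ * Xᴴ := by simp only [Matrix.mul_assoc]
      _ = X * R⁻¹ * Xᴴ * (X * R⁻¹ * Xᴴ) := by rw [hR2, hG]; simp only [Matrix.mul_assoc]
  rw [hT]
  refine Matrix.inv_eq_right_inv ?_
  rw [hV]
  calc X * R⁻¹ * Xᴴ * (U * R * Uᴴ) = X * R⁻¹ * (Xᴴ * U) * R * Uᴴ := by
        simp only [Matrix.mul_assoc]
    _ = X * (R⁻¹ * R) * Uᴴ := by rw [hXU]; simp only [Matrix.mul_assoc, Matrix.one_mul]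
    _ = 1 := by rw [hRi, Matrix.mul_one, hXU']
end
end

section
/- Let x_1,…,x_n be a basis of ℂ^n with Gram matrix Γ (Γ_{jk} = ⟨x_j, x_k⟩, conjugate-linear in the first argument), let Γ^{1/2} be the positive definite square root of Γ, let u_1,…,u_n be the dual basis (⟨x_j, u_k⟩ = δ_{jk}), and set S = ∑_k x_k x_k*. For a subset B ⊆ {1,…,n} let E_B be the diagonal 0–1 matrix with (E_B)_{kk} = 1 exactly when k ∈ B. Then S^{-1/2} (∑_{k∈B} x_k x_k*) S^{-1/2} = ∑_{a,b} (Γ^{1/2} E_B Γ^{1/2})_{ab} u_a u_b*. -/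
open Matrix
open scoped ComplexOrder

noncomputable section

open scoped MatrixOrder Matrix.Norms.L2Operator in
theorem posDef_sqrt_unique {n : ℕ} {A C : Matrix (Fin n) (Fin n) ℂ} (hA : A.PosDef)
    (hC : C.PosSemidef) (h : A * A = C * C) : A = C := by
  have h1 : CFC.sqrt (A * A) = A := CFC.sqrt_unique rfl hA.posSemidef.nonneg
  have h2 : CFC.sqrt (C * C) = C := CFC.sqrt_unique rfl hC.nonneg
  rw [← h1, h, h2]

/-- For a basis `x₁, …, xₙ` of `ℂ^n` with Gram matrix `Γ`, dual basis `u₁, …, uₙ`,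
`S = ∑ xₖxₖ*`, and a subset `B`:
`S^{-1/2} (∑_{k∈B} xₖxₖ*) S^{-1/2} = ∑_{a,b} (Γ^{1/2} E_B Γ^{1/2})_{ab} u_a u_b*`. -/
theorem stmt_13 {n : ℕ} (x : Fin n → (Fin n → ℂ))
    (hli : LinearIndependent ℂ x) (hsp : Submodule.span ℂ (Set.range x) = ⊤)
    (u : Fin n → (Fin n → ℂ))
    (hu : ∀ j k, star (x j) ⬝ᵥ u k = if j = k then 1 else 0)
    (Γ : Matrix (Fin n) (Fin n) ℂ) (hΓ : ∀ j k, Γ j k = star (x j) ⬝ᵥ x k)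
    (B : Finset (Fin n)) :
    ∀ Rs RΓ : Matrix (Fin n) (Fin n) ℂ,
      Rs.PosDef → Rs * Rs = ∑ k, outer (x k) →
      RΓ.PosDef → RΓ * RΓ = Γ →
      Rs⁻¹ * (∑ k ∈ B, outer (x k)) * Rs⁻¹ =
        ∑ a, ∑ b, (RΓ * Matrix.diagonal (fun k => if k ∈ B then (1 : ℂ) else 0) * RΓ) a b
          • Matrix.vecMulVec (u a) (star (u b)) := by
  intro Rs R hRs hS hR hG
  set E := Matrix.diagonal (fun k => if k ∈ B then (1 : ℂ) else 0) with hE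
  let X : Matrix (Fin n) (Fin n) ℂ := Matrix.of fun i k => x k i
  let U : Matrix (Fin n) (Fin n) ℂ := Matrix.of fun i k => u k i
  have hXU : Xᴴ * U = 1 := by
    ext j k
    have := hu j k
    simp only [dotProduct] at this
    simpa [X, U, Matrix.mul_apply, Matrix.one_apply] using this
  have hUX : U * Xᴴ = 1 := mul_eq_one_comm.mp hXU
  have hXU' : X * Uᴴ = 1 := by
    have := congrArg conjTranspose hUX
    simpa using this
  have hUX' : Uᴴ * X = 1 := mul_eq_one_comm.mp hXU'
  have hXX : Xᴴ * X = R * R := by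
    rw [hG]
    ext j k
    rw [hΓ]
    simp [X, Matrix.mul_apply, dotProduct]
  have hS' : Rs * Rs = X * Xᴴ := by
    rw [hS]
    ext i j
    simp [X, outer, Matrix.mul_apply, Matrix.sum_apply, Matrix.vecMulVec_apply]
  have hB : ∑ k ∈ B, outer (x k) = X * E * Xᴴ := by
    ext i j
    simp [X, outer, hE, Matrix.mul_apply, Matrix.sum_apply, Matrix.vecMulVec_apply,
      Matrix.diagonal_apply, Finset.sum_ite_mem]
  have hRHS : ∑ a, ∑ b, (R * E * R) a b • Matrix.vecMulVec (u a) (star (u b))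
      = U * (R * E * R) * Uᴴ := by
    generalize R * E * R = M
    ext i j
    simp only [U, Matrix.mul_apply, Matrix.sum_apply, Matrix.vecMulVec_apply, Matrix.smul_apply,
      Matrix.conjTranspose_apply, Matrix.of_apply, Finset.sum_mul, Pi.star_apply, smul_eq_mul]
    rw [Finset.sum_comm]
    refine Finset.sum_congr rfl fun a _ => Finset.sum_congr rfl fun b _ => ?_
    ring
  have hRH : Rᴴ = R := hR.isHermitian
  have hRsH : Rsᴴ = Rs := hRs.isHermitian
  have hUU : Uᴴ * U * (R * R) = 1 := by
    rw [← hXX]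
    calc Uᴴ * U * (Xᴴ * X) = Uᴴ * (U * Xᴴ) * X := by noncomm_ring
      _ = 1 := by rw [hUX, mul_one, hUX']
  have hUU' : R * R * (Uᴴ * U) = 1 := mul_eq_one_comm.mp hUU
  have hRUR : R * (Uᴴ * U) * R = 1 := by
    apply mul_eq_one_comm.mp
    rw [← hUU']
    noncomm_ring
  have hT : (U * (R * R * R) * Uᴴ).PosSemidef := by
    have h3 : (R * R * R).PosSemidef := by
      have := hR.posSemidef.mul_mul_conjTranspose_same R
      rwa [hRH] at this
    exact h3.mul_mul_conjTranspose_same U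
  have hRsT : Rs = U * (R * R * R) * Uᴴ := by
    apply posDef_sqrt_unique hRs hT
    rw [hS']
    symm
    calc U * (R * R * R) * Uᴴ * (U * (R * R * R) * Uᴴ)
        = U * (R * R) * (R * (Uᴴ * U) * R) * (R * R) * Uᴴ := by noncomm_ring
      _ = U * Xᴴ * X * Xᴴ * (X * Uᴴ) := by rw [hRUR, ← hXX]; noncomm_ring
      _ = X * Xᴴ := by rw [hUX, hXU']; simp
  have hX : Rs * (U * R) = X := by
    calc Rs * (U * R) = U * (R * R) * (R * (Uᴴ * U) * R) := by rw [hRsT]; noncomm_ring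
      _ = U * Xᴴ * X := by rw [hRUR, ← hXX]; noncomm_ring
      _ = X := by rw [hUX, one_mul]
  have hdet : IsUnit Rs.det := (Matrix.isUnit_iff_isUnit_det _).mp hRs.isUnit
  have h1 : Rs⁻¹ * X = U * R := by
    rw [← hX, Matrix.nonsing_inv_mul_cancel_left _ _ hdet]
  have h2 : Xᴴ * Rs⁻¹ = R * Uᴴ := by
    have := congrArg conjTranspose h1
    simpa [Matrix.conjTranspose_mul, Matrix.conjTranspose_nonsing_inv, hRsH, hRH] using this
  rw [hB, hRHS]
  calc Rs⁻¹ * (X * E * Xᴴ) * Rs⁻¹ = (Rs⁻¹ * X) * E * (Xᴴ * Rs⁻¹) := by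
        simp only [Matrix.mul_assoc]
    _ = U * (R * E * R) * Uᴴ := by rw [h1, h2]; simp only [Matrix.mul_assoc]
end
end

section
/- Let G be an n×n Hermitian positive definite complex matrix, and partition its rows and columns into m consecutive blocks of sizes r_1,…,r_m with r_1+⋯+r_m = n. Then there exists a block-diagonal matrix D = diag(D_1,…,D_m), with each D_i an r_i×r_i positive definite matrix, such that for every i the i-th diagonal block of the unique positive definite square root of DGD equals D_i². -/
open Matrix
open scoped ComplexOrder

noncomputable section

theorem aux_unitary {I : Type*} [Fintype I] [DecidableEq I] (u : I → ℂ) (c : ℂ)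
    (h : c + star c + c * star c * (star u ⬝ᵥ u) = 0) :
    (1 + c • vecMulVec u (star u)) ∈ Matrix.unitaryGroup I ℂ := by
  rw [Matrix.mem_unitaryGroup_iff, star_eq_conjTranspose]
  simp only [conjTranspose_add, conjTranspose_one, conjTranspose_smul, conjTranspose_vecMulVec, star_star]
  rw [add_mul, mul_add, mul_add]
  simp only [mul_one, one_mul, smul_mul_assoc, mul_smul_comm, vecMulVec_mul_vecMulVec, vecMulVec_smul, smul_smul]
  rw [add_assoc, ← add_smul, ← add_smul]
  convert add_zero (1 : Matrix I I ℂ)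
  convert zero_smul ℂ _
  rw [← h]; ring

theorem aux_trace_s16 {I : Type*} [Fintype I] [DecidableEq I] (u : I → ℂ) (c : ℂ) (R : Matrix I I ℂ) :
    trace ((1 + c • vecMulVec u (star u)) * R) = trace R + c * (star u ⬝ᵥ R *ᵥ u) := by
  rw [add_mul, one_mul, trace_add, smul_mul_assoc, trace_smul, vecMulVec_mul, trace_vecMulVec,
    smul_eq_mul, dotProduct_comm, dotProduct_mulVec]

theorem aux_scalar (q : ℂ) (h : ∀ z : ℂ, z * star z = 1 → ((z - 1) * q).re ≤ 0) : 0 ≤ q := by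
  by_cases hq : q = 0
  · simp [hq]
  have hn : (‖q‖ : ℂ) ≠ 0 := by simpa using hq
  have h1 := h (star q / ‖q‖) (by
    have : q * star q = (‖q‖ : ℂ) ^ 2 := by
      simpa using Complex.mul_conj' q
    simp only [star_div₀, star_star]
    have h2 : star (‖q‖ : ℂ) = ‖q‖ := by simp
    rw [h2]
    field_simp
    rw [mul_comm, this])
  have h2 : (star q / ‖q‖ - 1) * q = ‖q‖ - q := by
    have : q * star q = (‖q‖ : ℂ) ^ 2 := by
      simpa using Complex.mul_conj' q
    rw [sub_mul, div_mul_eq_mul_div, mul_comm (star q), this]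
    field_simp
  rw [h2] at h1
  simp at h1
  have h3 : q.re = ‖q‖ := le_antisymm (Complex.re_le_norm q) h1
  exact Complex.re_eq_norm.mp h3

theorem aux_psd {I : Type*} [Fintype I] [DecidableEq I] (R : Matrix I I ℂ)
    (h : ∀ V ∈ Matrix.unitaryGroup I ℂ, (trace (V * R)).re ≤ (trace R).re) : R.PosSemidef := by
  have hq : ∀ u : I → ℂ, 0 ≤ star u ⬝ᵥ R *ᵥ u := by
    intro u
    by_cases hu : u = 0
    · simp [hu]
    have hs : 0 < star u ⬝ᵥ u := dotProduct_star_self_pos_iff.mpr hu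
    set s := star u ⬝ᵥ u with hsdef
    have hs0 : s ≠ 0 := hs.ne'
    have hsr : star s = s := (IsSelfAdjoint.of_nonneg hs.le)
    have key : ∀ z : ℂ, z * star z = 1 → ((z - 1) * ((star u ⬝ᵥ R *ᵥ u) / s)).re ≤ 0 := by
      intro z hz
      have := h _ (aux_unitary u ((z - 1) / s) (by
        rw [← hsdef, star_div₀, hsr, star_sub, star_one]
        field_simp
        linear_combination hz))
      rw [aux_trace_s16] at this
      simp only [Complex.add_re] at this
      have e : (z - 1) * ((star u ⬝ᵥ R *ᵥ u) / s) = (z - 1) / s * (star u ⬝ᵥ R *ᵥ u) := by ring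
      rw [e]; linarith
    have := aux_scalar _ key
    have h2 := mul_nonneg this hs.le
    rwa [div_mul_cancel₀ _ hs0] at h2
  rw [← Matrix.isPositive_toEuclideanLin_iff, LinearMap.isPositive_iff_complex]
  intro x
  have h0 := hq x.ofLp
  have e : inner ℂ (Matrix.toEuclideanLin R x) x = star (star x.ofLp ⬝ᵥ R *ᵥ x.ofLp) := by
    rw [EuclideanSpace.inner_eq_star_dotProduct, Matrix.ofLp_toLpLin, Matrix.toLin'_apply,
      star_dotProduct, star_star, dotProduct_comm]
  rw [e, (IsSelfAdjoint.of_nonneg h0 : star _ = _)]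
  rw [Complex.nonneg_iff] at h0
  refine ⟨?_, h0.1⟩
  apply Complex.ext
  · simp
  · simpa using h0.2

theorem aux_sqrt {I : Type*} [Fintype I] [DecidableEq I] (A : Matrix I I ℂ) (hA : A.PosDef) :
    ∃ P : Matrix I I ℂ, P.PosDef ∧ P * P = A := by
  open scoped MatrixOrder Matrix.Norms.L2Operator in
  have h := hA.isStrictlyPositive
  exact ⟨CFC.sqrt A, (IsStrictlyPositive.sqrt A h).posDef, CFC.sqrt_mul_sqrt_self A h.nonneg⟩

theorem aux_unique {I : Type*} [Fintype I] [DecidableEq I] (A B : Matrix I I ℂ) (hA : A.PosDef)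
    (hB : B.PosDef) (h : A * A = B * B) : A = B := by
  open scoped MatrixOrder Matrix.Norms.L2Operator in
  have h1 := CFC.sqrt_mul_self A hA.isStrictlyPositive.nonneg
  have h2 := CFC.sqrt_mul_self B hB.isStrictlyPositive.nonneg
  rw [← h1, h, h2]

theorem aux_compact {I : Type*} [Fintype I] [DecidableEq I] :
    IsCompact (Matrix.unitaryGroup I ℂ : Set (Matrix I I ℂ)) := by
  have hc : IsClosed (Matrix.unitaryGroup I ℂ : Set (Matrix I I ℂ)) := by
    have : (Matrix.unitaryGroup I ℂ : Set (Matrix I I ℂ)) = {U | U * star U = 1} := by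
      ext U; exact Matrix.mem_unitaryGroup_iff
    rw [this]
    exact isClosed_eq (by fun_prop) continuous_const
  have hK : IsCompact (Set.univ.pi fun _ : I => Set.univ.pi fun _ : I => Metric.closedBall (0:ℂ) 1) :=
    isCompact_univ_pi fun _ => isCompact_univ_pi fun _ => isCompact_closedBall _ _
  refine IsCompact.of_isClosed_subset hK hc ?_
  intro U hU i _ j _
  simpa using entry_norm_bound_of_unitary hU i j

theorem aux_mul_bd {m : ℕ} {r : Fin m → ℕ}
    (X : Matrix ((i : Fin m) × Fin (r i)) ((i : Fin m) × Fin (r i)) ℂ)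
    (D : ∀ i, Matrix (Fin (r i)) (Fin (r i)) ℂ) (p : (i : Fin m) × Fin (r i)) (i : Fin m)
    (b : Fin (r i)) :
    (X * blockDiagonal' D) p ⟨i, b⟩ = ∑ c, X p ⟨i, c⟩ * D i c b := by
  rw [mul_apply, Fintype.sum_sigma, Finset.sum_eq_single i]
  · simp
  · intro j _ hj
    exact Finset.sum_eq_zero fun c _ => by rw [blockDiagonal'_apply_ne _ _ _ hj, mul_zero]
  · simp

theorem aux_vec_bd {m : ℕ} {r : Fin m → ℕ}
    (w : ((i : Fin m) × Fin (r i)) → ℂ)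
    (D : ∀ i, Matrix (Fin (r i)) (Fin (r i)) ℂ) (i : Fin m) (b : Fin (r i)) :
    (w ᵥ* blockDiagonal' D) ⟨i, b⟩ = ((fun a => w ⟨i, a⟩) ᵥ* D i) b := by
  simp only [vecMul, dotProduct]
  rw [Fintype.sum_sigma, Finset.sum_eq_single i]
  · simp
  · intro j _ hj
    exact Finset.sum_eq_zero fun c _ => by rw [blockDiagonal'_apply_ne _ _ _ hj, mul_zero]
  · simp

theorem aux_bd_vec {m : ℕ} {r : Fin m → ℕ}
    (w : ((i : Fin m) × Fin (r i)) → ℂ)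
    (D : ∀ i, Matrix (Fin (r i)) (Fin (r i)) ℂ) (i : Fin m) (b : Fin (r i)) :
    (blockDiagonal' D *ᵥ w) ⟨i, b⟩ = (D i *ᵥ (fun a => w ⟨i, a⟩)) b := by
  simp only [mulVec, dotProduct]
  rw [Fintype.sum_sigma, Finset.sum_eq_single i]
  · simp
  · intro j _ hj
    exact Finset.sum_eq_zero fun c _ => by rw [blockDiagonal'_apply_ne _ _ _ hj.symm, zero_mul]
  · simp

theorem aux_trace_bd {m : ℕ} {r : Fin m → ℕ}
    (X W : Matrix ((i : Fin m) × Fin (r i)) ((i : Fin m) × Fin (r i)) ℂ) :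
    trace (X * blockDiagonal' (fun i => (blockDiag' W i)ᴴ)) =
      ∑ i, ∑ a, ∑ b, X ⟨i, a⟩ ⟨i, b⟩ * star (W ⟨i, a⟩ ⟨i, b⟩) := by
  rw [trace, Fintype.sum_sigma]
  simp only [diag_apply, aux_mul_bd, conjTranspose_apply, blockDiag'_apply]

theorem aux_max {m : ℕ} (r : Fin m → ℕ)
    (A : Matrix ((i : Fin m) × Fin (r i)) ((i : Fin m) × Fin (r i)) ℂ) :
    ∃ U ∈ Matrix.unitaryGroup ((i : Fin m) × Fin (r i)) ℂ, 
      ∀ V ∈ Matrix.unitaryGroup ((i : Fin m) × Fin (r i)) ℂ,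
        (trace (V * ((U * A) * blockDiagonal' (fun i => (blockDiag' (U * A) i)ᴴ)))).re ≤
          (trace ((U * A) * blockDiagonal' (fun i => (blockDiag' (U * A) i)ᴴ))).re ∧
        ((trace (V * ((U * A) * blockDiagonal' (fun i => (blockDiag' (U * A) i)ᴴ)))).re =
          (trace ((U * A) * blockDiagonal' (fun i => (blockDiag' (U * A) i)ᴴ))).re →
          ∀ i a b, (V * (U * A)) ⟨i, a⟩ ⟨i, b⟩ = (U * A) ⟨i, a⟩ ⟨i, b⟩) := by
  obtain ⟨U, hU, hmax⟩ := (aux_compact (I := (i : Fin m) × Fin (r i))).exists_isMaxOn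
    ⟨1, one_mem _⟩ (f := fun U => ∑ i, ∑ a, ∑ b, ‖(U * A) ⟨i, a⟩ ⟨i, b⟩‖ ^ 2) (by
      apply Continuous.continuousOn
      refine continuous_finsetSum _ fun i _ => continuous_finsetSum _ fun a _ =>
        continuous_finsetSum _ fun b _ => ?_
      have : Continuous fun U : Matrix ((i : Fin m) × Fin (r i)) ((i : Fin m) × Fin (r i)) ℂ =>
        (U * A) ⟨i, a⟩ ⟨i, b⟩ := Continuous.matrix_elem (by fun_prop) _ _
      fun_prop)
  refine ⟨U, hU, fun V hV => ?_⟩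
  have h1 := hmax (mul_mem hV hU)
  simp only [Set.mem_ofPred_eq, Matrix.mul_assoc V U A] at h1
  set W := U * A with hW
  rw [← Matrix.mul_assoc, aux_trace_bd, aux_trace_bd]
  set Y := V * W with hY
  have id1 : ∀ x y : ℂ, ‖y‖ ^ 2 = ‖x‖ ^ 2 + ‖y - x‖ ^ 2 + 2 * ((y * star x).re - (x * star x).re) := by
    intro x y
    simp only [← Complex.normSq_eq_norm_sq, Complex.normSq_apply]
    simp
    ring
  have id2 : ∑ i, ∑ a, ∑ b, ‖Y ⟨i, a⟩ ⟨i, b⟩‖ ^ 2 = ∑ i, ∑ a, ∑ b, ‖W ⟨i, a⟩ ⟨i, b⟩‖ ^ 2 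
      + ∑ i, ∑ a, ∑ b, ‖Y ⟨i, a⟩ ⟨i, b⟩ - W ⟨i, a⟩ ⟨i, b⟩‖ ^ 2 
      + 2 * ((∑ i, ∑ a, ∑ b, Y ⟨i, a⟩ ⟨i, b⟩ * star (W ⟨i, a⟩ ⟨i, b⟩)).re 
       - (∑ i, ∑ a, ∑ b, W ⟨i, a⟩ ⟨i, b⟩ * star (W ⟨i, a⟩ ⟨i, b⟩)).re) := by
    simp only [Complex.re_sum, ← Finset.sum_sub_distrib, ← Finset.sum_add_distrib, Finset.mul_sum]
    exact Finset.sum_congr rfl fun i _ => Finset.sum_congr rfl fun a _ =>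
      Finset.sum_congr rfl fun b _ => id1 _ _
  have hpos : 0 ≤ ∑ i, ∑ a, ∑ b, ‖Y ⟨i, a⟩ ⟨i, b⟩ - W ⟨i, a⟩ ⟨i, b⟩‖ ^ 2 := by positivity
  refine ⟨by linarith, fun he => ?_⟩
  have hz : ∑ i, ∑ a, ∑ b, ‖Y ⟨i, a⟩ ⟨i, b⟩ - W ⟨i, a⟩ ⟨i, b⟩‖ ^ 2 = 0 := by linarith
  intro i a b
  rw [Finset.sum_eq_zero_iff_of_nonneg (fun _ _ => by positivity)] at hz
  have hz := hz i (Finset.mem_univ _)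
  rw [Finset.sum_eq_zero_iff_of_nonneg (fun _ _ => by positivity)] at hz
  have hz := hz a (Finset.mem_univ _)
  rw [Finset.sum_eq_zero_iff_of_nonneg (fun _ _ => by positivity)] at hz
  have hz := hz b (Finset.mem_univ _)
  simpa [sub_eq_zero] using hz

theorem aux_core {m : ℕ} (r : Fin m → ℕ)
    (A : Matrix ((i : Fin m) × Fin (r i)) ((i : Fin m) × Fin (r i)) ℂ) (hA : IsUnit A) :
    ∃ W : Matrix ((i : Fin m) × Fin (r i)) ((i : Fin m) × Fin (r i)) ℂ,
      Wᴴ * W = Aᴴ * A ∧ (∀ i, IsUnit (blockDiag' W i)ᴴ) ∧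
      (W * blockDiagonal' (fun i => (blockDiag' W i)ᴴ)).PosDef := by
  obtain ⟨U, hU, hmax⟩ := aux_max r A
  have hUU : Uᴴ * U = 1 := Matrix.mem_unitaryGroup_iff'.mp hU
  refine ⟨U * A, ?_, ?_⟩
  · rw [conjTranspose_mul, Matrix.mul_assoc, ← Matrix.mul_assoc Uᴴ, hUU, Matrix.one_mul]
  have hWu : IsUnit (U * A) := (IsUnit.of_mul_eq_one_right _ hUU).mul hA
  set W := U * A with hW
  set D : ∀ i, Matrix (Fin (r i)) (Fin (r i)) ℂ := fun i => (blockDiag' W i)ᴴ with hD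
  set R := W * blockDiagonal' D with hR
  have hpsd : R.PosSemidef := aux_psd R fun V hV => (hmax V hV).1
  have hker : ∀ u, R *ᵥ u = 0 → ∀ i a b, u ⟨i, a⟩ * (star u ᵥ* W) ⟨i, b⟩ = 0 := by
    intro u hu i a b
    by_cases hu0 : u = 0
    · simp [hu0]
    have hs : 0 < star u ⬝ᵥ u := dotProduct_star_self_pos_iff.mpr hu0
    set s := star u ⬝ᵥ u with hsdef
    have hs0 : s ≠ 0 := hs.ne'
    have hsr : star s = s := (IsSelfAdjoint.of_nonneg hs.le)
    have hV := aux_unitary u (-2 / s) (by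
        rw [← hsdef, star_div₀, hsr]
        simp
        field_simp
        ring)
    have := (hmax _ hV).2 (by rw [aux_trace_s16, hu]; simp) i a b
    rw [add_mul, one_mul, smul_mul_assoc, vecMulVec_mul] at this
    simpa [vecMulVec_apply, hs0] using this
  have hinj : ∀ i, ∀ v, D i *ᵥ v = 0 → v = 0 := by
    classical
    have hch : ∀ i, ∃ v, D i *ᵥ v = 0 ∧ (v = 0 → ∀ v, D i *ᵥ v = 0 → v = 0) := by
      intro i
      by_cases h : ∀ v, D i *ᵥ v = 0 → v = 0
      · exact ⟨0, by simp, fun _ => h⟩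
      · push Not at h
        obtain ⟨v, h1, h2⟩ := h
        exact ⟨v, h1, fun h => absurd h h2⟩
    choose v hv1 hv2 using hch
    let u : ((i : Fin m) × Fin (r i)) → ℂ := fun p => v p.1 p.2
    have hDu : blockDiagonal' D *ᵥ u = 0 := by
      ext ⟨i, b⟩
      rw [aux_bd_vec]
      exact congrFun (hv1 i) b
    have hRu : R *ᵥ u = 0 := by rw [hR, ← mulVec_mulVec, hDu, mulVec_zero]
    have huR : star u ᵥ* R = 0 := by
      have := congrArg star hRu
      rwa [star_mulVec, hpsd.1.eq, star_zero] at this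
    rw [hR, ← vecMul_vecMul] at huR
    have huW : star u ᵥ* W = 0 := by
      ext ⟨i, b⟩
      by_cases hvi : v i = 0
      · have hi := hv2 i hvi
        have hDi : IsUnit (D i) := by
          rw [← Matrix.mulVec_injective_iff_isUnit]
          intro x y hxy
          have := hi (x - y) (by rw [mulVec_sub, sub_eq_zero]; exact hxy)
          exact sub_eq_zero.mp this
        have h0 : (fun a => (star u ᵥ* W) ⟨i, a⟩) ᵥ* D i = 0 := by
          ext b
          rw [← aux_vec_bd, huR]
          rfl
        have := Matrix.vecMul_injective_iff_isUnit.mpr hDi (h0.trans (zero_vecMul _).symm)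
        exact congrFun this b
      · obtain ⟨a, ha⟩ := Function.ne_iff.mp hvi
        exact (mul_eq_zero.mp (hker u hRu i a b)).resolve_left ha
    have hsu : star u = 0 :=
      Matrix.vecMul_injective_iff_isUnit.mpr hWu (huW.trans (zero_vecMul _).symm)
    have hu0 : u = 0 := star_eq_zero.mp hsu
    intro i
    exact hv2 i (funext fun a => congrFun hu0 ⟨i, a⟩)
  have hDi : ∀ i, IsUnit (D i) := by
    intro i
    rw [← Matrix.mulVec_injective_iff_isUnit]
    intro x y hxy
    exact sub_eq_zero.mp (hinj i (x - y) (by rw [mulVec_sub, sub_eq_zero]; exact hxy))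
  refine ⟨hDi, ?_⟩
  rw [hpsd.posDef_iff_isUnit]
  refine hWu.mul ?_
  rw [← Matrix.mulVec_injective_iff_isUnit]
  intro x y hxy
  refine sub_eq_zero.mp (funext fun ⟨i, a⟩ => ?_)
  have : blockDiagonal' D *ᵥ (x - y) = 0 := by rw [mulVec_sub, sub_eq_zero]; exact hxy
  exact congrFun (hinj i (fun a => (x - y) ⟨i, a⟩)
    (funext fun b => by rw [← aux_bd_vec, this]; rfl)) a

theorem aux_polar {n : ℕ} (D : Matrix (Fin n) (Fin n) ℂ) (hD : IsUnit D) :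
    ∃ P V : Matrix (Fin n) (Fin n) ℂ, P.PosDef ∧ V * Vᴴ = 1 ∧ D = P * V := by
  have h1 : (D * Dᴴ).PosDef := by
    rw [(posSemidef_self_mul_conjTranspose D).posDef_iff_isUnit]
    exact hD.mul hD.star
  obtain ⟨P, hP, hPP⟩ := aux_sqrt _ h1
  have hdet : IsUnit P.det := (Matrix.isUnit_iff_isUnit_det _).mp hP.isUnit
  refine ⟨P, P⁻¹ * D, hP, ?_, ?_⟩
  · rw [conjTranspose_mul, hP.inv.1.eq, Matrix.mul_assoc, ← Matrix.mul_assoc D, ← hPP,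
      Matrix.mul_assoc P, Matrix.mul_nonsing_inv _ hdet, Matrix.mul_one, Matrix.nonsing_inv_mul _ hdet]
  · rw [Matrix.mul_nonsing_inv_cancel_left _ _ hdet]

/-- For a positive definite `G` partitioned into blocks of sizes `r₁, …, rₘ`, there is
a block-diagonal positive definite `D = diag(D₁, …, Dₘ)` such that the `i`-th diagonal
block of the unique positive definite square root of `DGD` equals `Dᵢ²`. -/
theorem stmt_16 {m : ℕ} (r : Fin m → ℕ)
    (G : Matrix ((i : Fin m) × Fin (r i)) ((i : Fin m) × Fin (r i)) ℂ)
    (hG : G.PosDef) :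
    ∃ D : ∀ i, Matrix (Fin (r i)) (Fin (r i)) ℂ,
      (∀ i, (D i).PosDef) ∧
      ∀ R : Matrix ((i : Fin m) × Fin (r i)) ((i : Fin m) × Fin (r i)) ℂ,
        R.PosDef → R * R = Matrix.blockDiagonal' D * G * Matrix.blockDiagonal' D →
        ∀ i (a b : Fin (r i)), R ⟨i, a⟩ ⟨i, b⟩ = (D i * D i) a b := by
  obtain ⟨A, hA, hAA⟩ := aux_sqrt G hG
  obtain ⟨W, hW, hu, hpd⟩ := aux_core r A hA.isUnit
  rw [hA.1.eq, hAA] at hW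
  choose P V hP hV hPV using fun i => aux_polar _ (hu i)
  refine ⟨P, hP, fun R hR hRR => ?_⟩
  set D : ∀ i, Matrix (Fin (r i)) (Fin (r i)) ℂ := fun i => (blockDiag' W i)ᴴ with hD
  have hPV' : blockDiagonal' D = blockDiagonal' P * blockDiagonal' V := by
    rw [← blockDiagonal'_mul]
    exact congrArg _ (funext hPV)
  have hVV : blockDiagonal' V * (blockDiagonal' V)ᴴ = 1 := by
    rw [blockDiagonal'_conjTranspose, ← blockDiagonal'_mul, ← blockDiagonal'_one]
    exact congrArg _ (funext hV)
  have hVV' := mul_eq_one_comm.mp hVV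
  have hPH : (blockDiagonal' P)ᴴ = blockDiagonal' P := by
    rw [blockDiagonal'_conjTranspose]
    exact congrArg _ (funext fun i => (hP i).1.eq)
  set S := W * blockDiagonal' D with hS
  have hSS : S * S = (blockDiagonal' D)ᴴ * G * blockDiagonal' D := by
    nth_rewrite 1 [← hpd.1.eq]
    rw [hS, conjTranspose_mul, ← hW]
    simp only [Matrix.mul_assoc]
  have hR' : R = blockDiagonal' V * S * (blockDiagonal' V)ᴴ := by
    apply aux_unique _ _ hR
    · apply hpd.mul_mul_conjTranspose_same
      exact Matrix.vecMul_injective_iff_isUnit.mpr (IsUnit.of_mul_eq_one _ hVV)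
    · have e : blockDiagonal' V * S * (blockDiagonal' V)ᴴ * (blockDiagonal' V * S * (blockDiagonal' V)ᴴ)
          = blockDiagonal' V * (S * S) * (blockDiagonal' V)ᴴ := by
        have : ∀ Q T : Matrix ((i : Fin m) × Fin (r i)) ((i : Fin m) × Fin (r i)) ℂ, T * Q = 1 →
            Q * S * T * (Q * S * T) = Q * (S * S) * T := by
          intro Q T h
          calc Q * S * T * (Q * S * T) = Q * S * (T * Q) * (S * T) := by
                simp only [Matrix.mul_assoc]
            _ = _ := by rw [h, Matrix.mul_one]; simp only [Matrix.mul_assoc]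
        exact this _ _ hVV'
      rw [e, hSS, hRR, hPV', conjTranspose_mul, hPH]
      have : ∀ Q T K : Matrix ((i : Fin m) × Fin (r i)) ((i : Fin m) × Fin (r i)) ℂ, Q * T = 1 →
          K * G * K = Q * (T * K * G * (K * Q)) * T := by
        intro Q T K h
        calc K * G * K = (Q * T) * K * G * K * (Q * T) := by rw [h]; simp
          _ = _ := by simp only [Matrix.mul_assoc]
      exact this _ _ _ hVV
  intro i a b
  have hSd : ∀ i, blockDiag' S i = (D i)ᴴ * D i := by
    intro i
    ext a b
    rw [blockDiag'_apply, hS, aux_mul_bd, mul_apply]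
    simp [hD, blockDiag'_apply]
  have hRd : ∀ c d, R ⟨i, c⟩ ⟨i, d⟩ = (V i * blockDiag' S i * (V i)ᴴ) c d := by
    intro c d
    rw [hR', blockDiagonal'_conjTranspose, aux_mul_bd, mul_apply]
    refine Finset.sum_congr rfl fun e _ => ?_
    congr 1
    rw [mul_apply, Fintype.sum_sigma, Finset.sum_eq_single i]
    · simp [mul_apply, blockDiag'_apply]
    · intro j _ hj
      exact Finset.sum_eq_zero fun c _ => by rw [blockDiagonal'_apply_ne _ _ _ hj.symm, zero_mul]
    · simp
  have hDi : D i = P i * V i := hPV i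
  rw [hRd, hSd, hDi, conjTranspose_mul, (hP i).1.eq]
  have : V i * ((V i)ᴴ * P i * (P i * V i)) * (V i)ᴴ = (V i * (V i)ᴴ) * (P i * P i) * (V i * (V i)ᴴ) := by
    simp only [Matrix.mul_assoc]
  rw [this, hV i, Matrix.one_mul, Matrix.mul_one]
end
end
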